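/- Let (W,S) be a 2-spherical cyclic hyperbolic Coxeter system of rank 3 (3 ≤ m_{rs}, m_{rt}, m_{st} with not all equal to 3). Then every combinatorial triangle T of roots contains a unique chamber: |⋂_{α∈T} α| = 1. -/

import Mathlib

variable {B W : Type*} [Group W] {M : CoxeterMatrix B}

/-- The simple root `α_s = {w ∈ W : ℓ(sw) > ℓ(w)}`, viewed as a half-space of chambers. -/
def simpleRoot (cs : CoxeterSystem M W) (s : B) : Set W :=
  {w : W | cs.length w < cs.length (cs.simple s * w)}

/-- `α` is a root (half-space) with associated reflection `r`: `α = v • α_s` and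
`r = v s v⁻¹` for some `v ∈ W`, `s ∈ S`.  The opposite root `-α` is the complement `αᶜ`. -/
def IsRootPair (cs : CoxeterSystem M W) (α : Set W) (r : W) : Prop :=
  ∃ (v : W) (s : B), α = (v * ·) '' simpleRoot cs s ∧ r = v * cs.simple s * v⁻¹

/-- A spherical rank-2 residue of the chamber system `Σ(W,S)`: a coset `c⟨s,t⟩` with
`s ≠ t` and `⟨s,t⟩` finite. -/
def IsSphRank2Residue (cs : CoxeterSystem M W) (R : Set W) : Prop :=
  ∃ (c : W) (s t : B), s ≠ t ∧
    (Subgroup.closure {cs.simple s, cs.simple t} : Set W).Finite ∧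
    R = (c * ·) '' (Subgroup.closure {cs.simple s, cs.simple t} : Set W)

/-- `∂²α`: the spherical rank-2 residues stabilized by the reflection `r = r_α`. -/
def res2 (cs : CoxeterSystem M W) (r : W) : Set (Set W) :=
  {R | IsSphRank2Residue cs R ∧ (r * ·) '' R = R}

/-!
Write `N r` for the side of the wall of a reflection `r` that does not contain `1`. Translate the
triangle so that the residue opposite to `α₃` becomes a standard parabolic subgroup `⟨s i, s j⟩`
avoiding `N r₃`. Two reflections that stabilize a common finite residue have a product of finite
order, so the walls of `r₁` and `r₂` both cross that of `r₃`. As no two simple reflections commute,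
the projection of `N r₃` to `⟨s i, s j⟩` is very small; unless all exponents are `3`, this forces
`r₃` to be conjugate to the third simple reflection `s k` by some `c ∈ ⟨s i, s j⟩`. The only
reflections of `⟨s i, s j⟩` whose walls cross that of `s k` are `s i` and `s j`, hence the three
walls bound a common chamber. It lies in all three roots, and it is the only such chamber because
every `w ≠ 1` has a left descent.
-/

/-! ### The order of a product of two simple reflections -/

section GeometricRepresentation

open Real Polynomial.Chebyshev

/-- The linear form `2⟨e_i, ·⟩` of the geometric representation on `B →₀ ℝ`, where
`⟨e_i, e_j⟩ = -cos (π / M i j)`. For `M i j = 0`, which stands for `∞`, this is `-cos 0 = -1`. -/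
noncomputable def simpleCoroot (M : CoxeterMatrix B) (i : B) : Module.Dual ℝ (B →₀ ℝ) :=
  Finsupp.linearCombination ℝ fun j ↦ -2 * cos (π / M i j)

theorem simpleCoroot_single (i j : B) :
    simpleCoroot M i (Finsupp.single j 1) = -2 * cos (π / M i j) := by
  simp [simpleCoroot]

theorem simpleCoroot_single_self (i : B) : simpleCoroot M i (Finsupp.single i 1) = 2 := by
  simp [simpleCoroot_single]

/-- The reflection by which the simple generator `i` acts in the geometric representation. -/
noncomputable def geometricReflection (M : CoxeterMatrix B) (i : B) :
    (B →₀ ℝ) ≃ₗ[ℝ] (B →₀ ℝ) :=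
  Module.reflection (simpleCoroot_single_self (M := M) i)

theorem two_mul_cos_two_pi_div (i j : B) :
    2 * cos (2 * π / M i j) = simpleCoroot M i (Finsupp.single j 1) *
      simpleCoroot M j (Finsupp.single i 1) - 2 := by
  rw [simpleCoroot_single, simpleCoroot_single, M.symmetric j i, mul_div_assoc, cos_two_mul]
  ring

theorem sin_two_pi_div_ne_zero {m : ℕ} (hm : 3 ≤ m) : sin (2 * π / m) ≠ 0 := by
  have hm' : (3 : ℝ) ≤ m := by exact_mod_cast hm
  have hm₀ : (0 : ℝ) < m := by positivity
  refine (sin_pos_of_pos_of_lt_pi (by positivity) ?_).ne'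
  rw [div_lt_iff₀ hm₀]
  nlinarith [pi_pos]

theorem chebyshevS_eval_eq_zero_of_even {k : ℕ} (hk : 3 ≤ 2 * k) :
    (S ℝ ((k : ℤ) - 1)).eval (2 * cos (2 * π / ((2 * k : ℕ) : ℝ))) = 0 := by
  refine (mul_eq_zero.mp ?_).resolve_right (sin_two_pi_div_ne_zero hk)
  have hk₀ : (k : ℝ) ≠ 0 := by norm_cast; omega
  have hangle : ((((k : ℤ) - 1 : ℤ) : ℝ) + 1) * (2 * π / ((2 * k : ℕ) : ℝ)) = π := by
    push_cast
    field_simp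
    ring
  rw [S_two_mul_real_cos, hangle, sin_pi]

theorem chebyshevS_eval_add_eval_eq_zero_of_odd {k : ℕ} (hk : 3 ≤ 2 * k + 1) :
    (S ℝ (k : ℤ)).eval (2 * cos (2 * π / ((2 * k + 1 : ℕ) : ℝ))) +
      (S ℝ ((k : ℤ) - 1)).eval (2 * cos (2 * π / ((2 * k + 1 : ℕ) : ℝ))) = 0 := by
  refine (mul_eq_zero.mp ?_).resolve_right (sin_two_pi_div_ne_zero hk)
  have hangle : (((k : ℤ) : ℝ) + 1) * (2 * π / ((2 * k + 1 : ℕ) : ℝ)) =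
      2 * π - ((((k : ℤ) - 1 : ℤ) : ℝ) + 1) * (2 * π / ((2 * k + 1 : ℕ) : ℝ)) := by
    push_cast
    field_simp
    ring
  rw [add_mul, S_two_mul_real_cos, S_two_mul_real_cos, hangle, sin_two_pi_sub, neg_add_cancel]

theorem geometricReflection_mul_pow_of_three_le {i j : B} (h : 3 ≤ M i j) :
    (geometricReflection M i * geometricReflection M j) ^ M i j = 1 := by
  ext1 z
  have hpow := Module.reflection_mul_reflection_pow_apply (simpleCoroot_single_self (M := M) i)
    (simpleCoroot_single_self (M := M) j) (M i j) z _ (two_mul_cos_two_pi_div i j)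
  obtain ⟨k, hk | hk⟩ := Nat.even_or_odd' (M i j)
  · have hzero := chebyshevS_eval_eq_zero_of_even (hk ▸ h)
    rw [hk] at hpow
    rw [show (((2 * k : ℕ) : ℤ) - 2) / 2 = k - 1 by omega,
      show (((2 * k : ℕ) : ℤ) - 1) / 2 = k - 1 by omega, hzero] at hpow
    rw [hk]
    simpa [geometricReflection] using hpow
  · have hzero := chebyshevS_eval_add_eval_eq_zero_of_odd (hk ▸ h)
    rw [hk] at hpow
    rw [show (((2 * k + 1 : ℕ) : ℤ) - 1) / 2 = k by omega,
      show (((2 * k + 1 : ℕ) : ℤ) - 3) / 2 = k - 1 by omega,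
      show (((2 * k + 1 : ℕ) : ℤ) - 2) / 2 = k - 1 by omega,
      show (((2 * k + 1 : ℕ) : ℤ)) / 2 = k by omega, hzero] at hpow
    rw [hk]
    simpa [geometricReflection] using hpow

theorem geometricReflection_mul_pow_of_eq_two {i j : B} (h : M i j = 2) :
    (geometricReflection M i * geometricReflection M j) ^ 2 = 1 := by
  ext1 z
  have hij : simpleCoroot M i (Finsupp.single j 1) = 0 := by simp [simpleCoroot_single, h]
  have hji : simpleCoroot M j (Finsupp.single i 1) = 0 := by
    simp [simpleCoroot_single, M.symmetric j i, h]
  rw [geometricReflection, geometricReflection, Module.reflection_mul_reflection_pow_apply]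
  simp only [hij, hji, mul_zero, zero_sub, Nat.cast_ofNat, sub_self, EuclideanDomain.zero_div,
    S_zero, Polynomial.eval_one, Int.reduceSub, Int.reduceDiv, S_neg_one, Polynomial.eval_zero,
    add_zero, mul_one, zero_mul, ne_eq, OfNat.ofNat_ne_zero, not_false_eq_true,
    EuclideanDomain.div_self, S_one, Polynomial.eval_X, one_mul, LinearEquiv.coe_one, id_eq]
  module

theorem isLiftable_geometricReflection : M.IsLiftable (geometricReflection M) := by
  intro i j
  obtain rfl | hij := eq_or_ne i j
  · rw [M.diagonal, pow_one]
    ext1 z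
    exact Module.involutive_reflection (simpleCoroot_single_self (M := M) i) z
  have hne_one : M i j ≠ 1 := M.off_diagonal i j hij
  obtain h | h | h : M i j = 0 ∨ M i j = 2 ∨ 3 ≤ M i j := by omega
  · rw [h, pow_zero]
  · rw [h, geometricReflection_mul_pow_of_eq_two h]
  · exact geometricReflection_mul_pow_of_three_le h

theorem chebyshevS_eval_of_simple_mul_simple_pow_eq_one (cs : CoxeterSystem M W) {i j : B}
    (hij : i ≠ j) {n : ℕ} (hn : (cs.simple i * cs.simple j) ^ n = 1) :
    (S ℝ (n : ℤ)).eval (2 * cos (2 * π / M i j)) +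
        (S ℝ ((n : ℤ) - 1)).eval (2 * cos (2 * π / M i j)) = 1 ∧
      (S ℝ ((n : ℤ) - 1)).eval (2 * cos (2 * π / M i j)) * cos (π / M i j) = 0 := by
  have hpow : (geometricReflection M i * geometricReflection M j) ^ n = 1 := by
    have h := congrArg (cs.lift ⟨_, isLiftable_geometricReflection⟩) hn
    rwa [map_pow, map_mul, cs.lift_apply_simple, cs.lift_apply_simple, map_one] at h
  have hself := Module.reflection_mul_reflection_pow_apply_self
    (simpleCoroot_single_self (M := M) i)
    (simpleCoroot_single_self (M := M) j) n _ (two_mul_cos_two_pi_div i j)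
  have hji : simpleCoroot M j (Finsupp.single i 1) = -2 * cos (π / M i j) := by
    rw [simpleCoroot_single, M.symmetric]
  rw [← geometricReflection, ← geometricReflection, hpow, hji] at hself
  have hi := DFunLike.congr_fun hself i
  have hj := DFunLike.congr_fun hself j
  refine ⟨?_, ?_⟩
  · simpa [hij.symm] using hi.symm
  · simpa [hij] using hj

theorem dvd_of_chebyshevS_eval {m n : ℕ} (hm : 3 ≤ m)
    (hadd : (S ℝ (n : ℤ)).eval (2 * cos (2 * π / m)) +
      (S ℝ ((n : ℤ) - 1)).eval (2 * cos (2 * π / m)) = 1)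
    (hzero : (S ℝ ((n : ℤ) - 1)).eval (2 * cos (2 * π / m)) = 0) : m ∣ n := by
  have hsin : sin (n * (2 * π / m)) = 0 := by
    have h := S_two_mul_real_cos (2 * π / m) ((n : ℤ) - 1)
    rw [hzero] at h
    push_cast at h
    simpa using h.symm
  have hcos : cos (n * (2 * π / m)) = 1 := by
    have h := S_two_mul_real_cos (2 * π / m) n
    rw [hzero, add_zero] at hadd
    rw [hadd, Int.cast_natCast, add_one_mul, sin_add, hsin, zero_mul, zero_add] at h
    exact mul_right_cancel₀ (sin_two_pi_div_ne_zero hm) h.symm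
  obtain ⟨k, hk⟩ := (cos_eq_one_iff _).mp hcos
  have hm₀ : (m : ℝ) ≠ 0 := by norm_cast; omega
  have hmul : (n : ℤ) = m * k := by
    have : (n : ℝ) = m * k := by
      field_simp at hk
      linarith
    exact_mod_cast this
  exact Int.natCast_dvd_natCast.mp ⟨k, hmul⟩

theorem dvd_of_simple_mul_simple_pow_eq_one (cs : CoxeterSystem M W) {i j : B} {n : ℕ}
    (hn : (cs.simple i * cs.simple j) ^ n = 1) : M i j ∣ n := by
  obtain rfl | hij := eq_or_ne i j
  · simp
  obtain ⟨hadd, hmul⟩ := chebyshevS_eval_of_simple_mul_simple_pow_eq_one cs hij hn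
  have hne_one : M i j ≠ 1 := M.off_diagonal i j hij
  obtain h | h | h : M i j = 0 ∨ M i j = 2 ∨ 3 ≤ M i j := by omega
  · have hn₀ : n = 0 := by simpa [h] using hmul
    simp [h, hn₀]
  · rw [h]
    refine (Nat.not_odd_iff_even.mp fun hodd ↦ ?_).two_dvd
    have hodd' : Odd (n : ℤ) := by exact_mod_cast hodd
    have heval : 2 * cos (2 * π / M i j) = -2 := by simp [h]
    rw [heval, S_eval_neg_two, S_eval_neg_two, Int.negOnePow_odd _ hodd',
      Int.negOnePow_even _ (hodd'.sub_odd odd_one)] at hadd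
    norm_num at hadd
  · have hcos : cos (π / M i j) ≠ 0 := by
      have hm : (3 : ℝ) ≤ M i j := by exact_mod_cast h
      have hm₀ : (0 : ℝ) < M i j := by positivity
      refine (cos_pos_of_mem_Ioo ⟨?_, ?_⟩).ne'
      · linarith [pi_pos, show 0 < π / M i j by positivity]
      · rw [div_lt_div_iff₀ hm₀ (by norm_num)]
        nlinarith [pi_pos]
    exact dvd_of_chebyshevS_eval h hadd ((mul_eq_zero.mp hmul).resolve_right hcos)

theorem orderOf_simple_mul_simple (cs : CoxeterSystem M W) (i j : B) :
    orderOf (cs.simple i * cs.simple j) = M i j :=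
  Nat.dvd_antisymm (orderOf_dvd_of_pow_eq_one (cs.simple_mul_simple_pow i j))
    (dvd_of_simple_mul_simple_pow_eq_one cs (pow_orderOf_eq_one _))

end GeometricRepresentation

/-! ### Half-spaces and inversions -/

section CoxeterComplex

variable {cs : CoxeterSystem M W}

local prefix:100 "s" => cs.simple
local prefix:100 "ℓ" => cs.length

open Classical in
/-- The involution of `W × ZMod 2` by which the generator `i` acts: it conjugates the first
component by `s i`, and changes the sign when that component is `s i` itself. Restricted to
reflections this is the action of `W` on its roots, a root being a reflection with a sign. -/
noncomputable def reflectionPerm (cs : CoxeterSystem M W) (i : B) : Equiv.Perm (W × ZMod 2) :=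
  Function.Involutive.toPerm
    (fun p ↦ (cs.simple i * p.1 * cs.simple i, p.2 + if p.1 = cs.simple i then 1 else 0)) <| by
      rintro ⟨t, e⟩
      have hconj : cs.simple i * (cs.simple i * t * cs.simple i) * cs.simple i = t := by
        simp [mul_assoc]
      have hiff : cs.simple i * t * cs.simple i = cs.simple i ↔ t = cs.simple i := by
        rw [mul_eq_right, ← inv_eq_iff_mul_eq_one, cs.inv_simple, eq_comm]
      simp only [hconj, hiff, add_assoc, CharTwo.add_self_eq_zero, add_zero]

open Classical in
theorem reflectionPerm_apply (i : B) (t : W) (e : ZMod 2) :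
    reflectionPerm cs i (t, e) = (s i * t * s i, e + if t = s i then 1 else 0) := rfl

theorem simple_mul_simple_mul_simple_pow (i j : B) (n : ℕ) :
    s j * (s i * s j) ^ n = ((s i * s j) ^ n)⁻¹ * s j := by
  have h : SemiconjBy (s j) (s i * s j) (s i * s j)⁻¹ := by
    simp [SemiconjBy, mul_assoc]
  rw [← inv_pow]
  exact h.pow_right n

theorem conj_pow_eq_simple_iff (i j : B) (n : ℕ) (t : W) :
    (s i * s j) ^ n * t * ((s i * s j) ^ n)⁻¹ = s j ↔ t = s j * (s i * s j) ^ (2 * n) := by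
  rw [mul_inv_eq_iff_eq_mul, ← eq_inv_mul_iff_mul_eq, ← mul_assoc,
    ← simple_mul_simple_mul_simple_pow, two_mul, pow_add, mul_assoc]

theorem simple_conj_pow_eq_simple_iff (i j : B) (n : ℕ) (t : W) :
    s j * ((s i * s j) ^ n * t * ((s i * s j) ^ n)⁻¹) * s j = s i ↔
      t = s j * (s i * s j) ^ (2 * n + 1) := by
  have hpow : s j * (s i * s j) ^ (2 * n + 1) =
      ((s i * s j) ^ n)⁻¹ * (s j * s i * s j) * (s i * s j) ^ n := by
    rw [show 2 * n + 1 = n + 1 + n by ring, pow_add, pow_succ, ← mul_assoc, ← mul_assoc,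
      simple_mul_simple_mul_simple_pow i j n]
    simp only [mul_assoc]
  rw [hpow]
  generalize (s i * s j) ^ n = g
  constructor
  · intro h
    rw [← h]
    simp [mul_assoc]
  · rintro rfl
    simp [mul_assoc]

open Classical in
theorem reflectionPerm_mul_pow_apply (i j : B) (n : ℕ) (t : W) (e : ZMod 2) :
    ((reflectionPerm cs i * reflectionPerm cs j) ^ n) (t, e) =
      ((s i * s j) ^ n * t * ((s i * s j) ^ n)⁻¹,
        e + ∑ l ∈ Finset.range (2 * n), if t = s j * (s i * s j) ^ l then 1 else 0) := by
  induction n with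
  | zero => simp
  | succ n ih =>
    rw [pow_succ', Equiv.Perm.mul_apply, ih, Equiv.Perm.mul_apply, reflectionPerm_apply,
      reflectionPerm_apply, conj_pow_eq_simple_iff, simple_conj_pow_eq_simple_iff,
      show 2 * (n + 1) = 2 * n + 1 + 1 by ring, Finset.sum_range_succ, Finset.sum_range_succ,
      pow_succ' (s i * s j) n]
    simp [mul_assoc, add_assoc]

theorem isLiftable_reflectionPerm : M.IsLiftable (reflectionPerm cs) := by
  classical
  intro i j
  ext1 ⟨t, e⟩
  have hperiod (l : ℕ) : (s i * s j) ^ (M i j + l) = (s i * s j) ^ l := by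
    rw [pow_add, cs.simple_mul_simple_pow, one_mul]
  rw [reflectionPerm_mul_pow_apply, cs.simple_mul_simple_pow, two_mul, Finset.sum_range_add]
  simp [hperiod, CharTwo.add_self_eq_zero]

/-- The action of `W` on signed reflections extending `reflectionPerm`. -/
noncomputable def reflectionAction (cs : CoxeterSystem M W) : W →* Equiv.Perm (W × ZMod 2) :=
  cs.lift ⟨reflectionPerm cs, isLiftable_reflectionPerm⟩

theorem reflectionAction_simple (i : B) : reflectionAction cs (s i) = reflectionPerm cs i :=
  cs.lift_apply_simple isLiftable_reflectionPerm i

/-- The sign that `w⁻¹` gives to `t` under `reflectionAction`. When `t` is a reflection, it is `1`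
exactly if `t` is a left inversion of `w`. -/
noncomputable def reflectionCocycle (cs : CoxeterSystem M W) (w t : W) : ZMod 2 :=
  (reflectionAction cs w⁻¹ (t, 0)).2

theorem reflectionAction_apply (w t : W) (e : ZMod 2) :
    reflectionAction cs w (t, e) = (w * t * w⁻¹, e + reflectionCocycle cs w⁻¹ t) := by
  rw [reflectionCocycle, inv_inv]
  induction w using cs.simple_induction_left generalizing t e with
  | one => simp
  | mul_simple_left w i ih =>
    rw [map_mul, Equiv.Perm.mul_apply, Equiv.Perm.mul_apply, ih t e, ih t 0,
      reflectionAction_simple, reflectionPerm_apply, reflectionPerm_apply]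
    simp [mul_assoc, add_assoc]

theorem reflectionCocycle_mul (v w t : W) : reflectionCocycle cs (v * w) t =
    reflectionCocycle cs v t + reflectionCocycle cs w (v⁻¹ * t * v) := by
  rw [reflectionCocycle, mul_inv_rev, map_mul, Equiv.Perm.mul_apply, reflectionAction_apply v⁻¹,
    reflectionAction_apply w⁻¹]
  simp

open Classical in
theorem reflectionCocycle_simple (i : B) (t : W) :
    reflectionCocycle cs (s i) t = if t = s i then 1 else 0 := by
  simp [reflectionCocycle, reflectionAction_simple, reflectionPerm_apply]

theorem reflectionCocycle_one (t : W) : reflectionCocycle cs 1 t = 0 := by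
  simp [reflectionCocycle]

theorem mem_leftInvSeq_of_reflectionCocycle_ne_zero {ω : List B} {t : W}
    (h : reflectionCocycle cs (cs.wordProd ω) t ≠ 0) : t ∈ cs.leftInvSeq ω := by
  classical
  induction ω generalizing t with
  | nil => simp [reflectionCocycle_one] at h
  | cons i ω ih =>
    simp only [CoxeterSystem.leftInvSeq, List.mem_cons, List.mem_map]
    refine or_iff_not_imp_left.mpr fun hti ↦ ⟨(s i)⁻¹ * t * s i, ih ?_, by simp [mul_assoc]⟩
    simpa [cs.wordProd_cons, reflectionCocycle_mul, reflectionCocycle_simple, hti] using h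

theorem reflectionCocycle_self {t : W} (ht : cs.IsReflection t) : reflectionCocycle cs t t = 1 := by
  classical
  obtain ⟨v, i, rfl⟩ := ht
  have hconj : v⁻¹ * (v * s i * v⁻¹) * v = s i := by group
  have hcancel : reflectionCocycle cs v (v * s i * v⁻¹) + reflectionCocycle cs v⁻¹ (s i) = 0 := by
    rw [← reflectionCocycle_one (cs := cs) (v * s i * v⁻¹), ← mul_inv_cancel v,
      reflectionCocycle_mul, hconj]
  calc reflectionCocycle cs (v * s i * v⁻¹) (v * s i * v⁻¹)
      = reflectionCocycle cs v (v * s i * v⁻¹) + (1 + reflectionCocycle cs v⁻¹ (s i)) := by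
        rw [mul_assoc v, reflectionCocycle_mul v, ← mul_assoc v, hconj, reflectionCocycle_mul,
          reflectionCocycle_simple]
        simp
    _ = 1 := by rw [add_left_comm, hcancel, add_zero]

/-- For a reflection `r`, the half-space bounded by `r` which does not contain `1`. -/
def negSide (cs : CoxeterSystem M W) (r : W) : Set W :=
  {w | cs.length (r * w) < cs.length w}

local notation "N" => negSide cs

theorem mem_negSide_iff {r w : W} : w ∈ N r ↔ ℓ (r * w) < ℓ w := Iff.rfl

theorem mem_negSide_of_reflectionCocycle_eq_one {t w : W} (h : reflectionCocycle cs w t = 1) :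
    w ∈ N t := by
  obtain ⟨ω, hω, rfl⟩ := cs.exists_isReduced w
  have hne : reflectionCocycle cs (cs.wordProd ω) t ≠ 0 := by simp [h]
  exact (cs.isLeftInversion_of_mem_leftInvSeq hω
    (mem_leftInvSeq_of_reflectionCocycle_ne_zero hne)).2

theorem mem_negSide_iff_reflectionCocycle {t : W} (ht : cs.IsReflection t) {w : W} :
    w ∈ N t ↔ reflectionCocycle cs w t = 1 := by
  refine ⟨fun hlt ↦ ?_, mem_negSide_of_reflectionCocycle_eq_one⟩
  by_contra hne
  have hzero : reflectionCocycle cs w t = 0 := (Fin.exists_fin_two.mp ⟨_, rfl⟩).resolve_right hne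
  have hgt : t * w ∈ N t := by
    apply mem_negSide_of_reflectionCocycle_eq_one
    simp [reflectionCocycle_mul, reflectionCocycle_self ht, hzero]
  rw [mem_negSide_iff, ← mul_assoc, ht.mul_self, one_mul] at hgt
  exact hgt.asymm hlt

theorem mem_leftInvSeq_of_mem_negSide {t : W} (ht : cs.IsReflection t) {ω : List B}
    (h : cs.wordProd ω ∈ N t) : t ∈ cs.leftInvSeq ω := by
  apply mem_leftInvSeq_of_reflectionCocycle_ne_zero
  rw [(mem_negSide_iff_reflectionCocycle ht).mp h]
  exact one_ne_zero

theorem isReflection_inv_conj {t : W} (ht : cs.IsReflection t) (v : W) :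
    cs.IsReflection (v⁻¹ * t * v) := by
  simpa using ht.conj v⁻¹

theorem mul_mem_negSide_iff {t : W} (ht : cs.IsReflection t) {v w : W} :
    v * w ∈ N t ↔ (v ∈ N t ↔ w ∉ N (v⁻¹ * t * v)) := by
  rw [mem_negSide_iff_reflectionCocycle ht, mem_negSide_iff_reflectionCocycle ht,
    mem_negSide_iff_reflectionCocycle (isReflection_inv_conj ht v), reflectionCocycle_mul]
  generalize reflectionCocycle cs v t = x
  generalize reflectionCocycle cs w (v⁻¹ * t * v) = y
  revert x y
  decide

theorem one_notMem_negSide (t : W) : 1 ∉ N t := by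
  simp [mem_negSide_iff]

theorem simple_mem_negSide_iff {t : W} (ht : cs.IsReflection t) {i : B} :
    s i ∈ N t ↔ t = s i := by
  classical
  rw [mem_negSide_iff_reflectionCocycle ht, reflectionCocycle_simple]
  simp

theorem self_mem_negSide {t : W} (ht : cs.IsReflection t) : t ∈ N t :=
  (mem_negSide_iff_reflectionCocycle ht).mpr (reflectionCocycle_self ht)

theorem self_mul_mem_negSide_iff {t : W} (ht : cs.IsReflection t) {w : W} :
    t * w ∈ N t ↔ w ∉ N t := by
  rw [mul_mem_negSide_iff ht]
  simp [self_mem_negSide ht]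

theorem eq_conj_of_mem_negSide_mul_simple {t : W} (ht : cs.IsReflection t) {w : W} {i : B}
    (hw : w ∉ N t) (hwi : w * s i ∈ N t) : t = w * s i * w⁻¹ := by
  rw [mul_mem_negSide_iff ht, simple_mem_negSide_iff (isReflection_inv_conj ht w)] at hwi
  have h : w⁻¹ * t * w = s i := by tauto
  rw [← h]
  group

theorem mem_negSide_iff_inv_mul_mem {t : W} (ht : cs.IsReflection t) {v w : W} (hv : v ∉ N t) :
    w ∈ N t ↔ v⁻¹ * w ∈ N (v⁻¹ * t * v) := by
  have h := mul_mem_negSide_iff ht (v := v) (w := v⁻¹ * w)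
  rw [mul_inv_cancel_left] at h
  tauto

theorem inv_mem_negSide_iff {t : W} (ht : cs.IsReflection t) {w : W} :
    w⁻¹ ∈ N t ↔ w ∈ N (w * t * w⁻¹) := by
  have h : w * t * w⁻¹ * w = (t * w⁻¹)⁻¹ := by simp [ht.inv]
  rw [mem_negSide_iff, mem_negSide_iff, h, cs.length_inv, cs.length_inv]

/-! ### Parabolic subgroups -/

/-- The standard parabolic subgroup generated by the simple reflections in `J`. -/
def parabolic (cs : CoxeterSystem M W) (J : Set B) : Subgroup W :=
  Subgroup.closure (cs.simple '' J)

theorem simple_mem_parabolic {J : Set B} {i : B} (hi : i ∈ J) : s i ∈ parabolic cs J :=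
  Subgroup.subset_closure (Set.mem_image_of_mem _ hi)

theorem parabolic_mono {J K : Set B} (h : J ⊆ K) : parabolic cs J ≤ parabolic cs K :=
  Subgroup.closure_mono (Set.image_mono h)

@[elab_as_elim]
theorem parabolic_induction {J : Set B} {p : (v : W) → v ∈ parabolic cs J → Prop}
    (one : p 1 (one_mem _))
    (mul_simple_left : ∀ v hv i (hi : i ∈ J), p v hv →
      p (s i * v) (mul_mem (simple_mem_parabolic hi) hv))
    {v : W} (hv : v ∈ parabolic cs J) : p v hv := by
  induction hv using Subgroup.closure_induction_left with
  | one => exact one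
  | mul_left x hx y hy ih =>
    obtain ⟨i, hi, rfl⟩ := hx
    exact mul_simple_left y hy i hi ih
  | inv_mul_cancel x hx y hy ih =>
    obtain ⟨i, hi, rfl⟩ := hx
    simp only [cs.inv_simple]
    exact mul_simple_left y hy i hi ih

theorem exists_eraseIdx_of_mem_negSide {t : W} (ht : cs.IsReflection t) {ω : List B}
    (h : cs.wordProd ω ∈ N t) :
    ∃ j < ω.length, t * cs.wordProd ω = cs.wordProd (ω.eraseIdx j) := by
  obtain ⟨j, hj, rfl⟩ := List.getElem_of_mem (mem_leftInvSeq_of_mem_negSide ht h)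
  refine ⟨j, by simpa using hj, ?_⟩
  rw [← List.getD_eq_getElem _ 1 hj, cs.getD_leftInvSeq_mul_wordProd]

theorem exists_isReduced_of_mem_parabolic {J : Set B} {v : W} (hv : v ∈ parabolic cs J) :
    ∃ ω : List B, (∀ i ∈ ω, i ∈ J) ∧ cs.IsReduced ω ∧ cs.wordProd ω = v := by
  induction hv using parabolic_induction with
  | one => exact ⟨[], by simp, by simp [CoxeterSystem.IsReduced], by simp⟩
  | mul_simple_left v _ i hi ih =>
    obtain ⟨ω, hωJ, hω, rfl⟩ := ih
    have hlen : ℓ cs.wordProd ω = ω.length := hω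
    rcases cs.length_simple_mul (cs.wordProd ω) i with h | h
    · refine ⟨i :: ω, List.forall_mem_cons.mpr ⟨hi, hωJ⟩, ?_, cs.wordProd_cons i ω⟩
      rw [CoxeterSystem.IsReduced, cs.wordProd_cons, h, hlen, List.length_cons]
    · have hneg : cs.wordProd ω ∈ N (s i) := by
        rw [mem_negSide_iff]
        omega
      obtain ⟨j, hj, hdel⟩ := exists_eraseIdx_of_mem_negSide (cs.isReflection_simple i) hneg
      refine ⟨ω.eraseIdx j, fun k hk ↦ hωJ k (List.mem_of_mem_eraseIdx hk), ?_, hdel.symm⟩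
      rw [CoxeterSystem.IsReduced, ← hdel, List.length_eraseIdx_of_lt hj]
      omega

theorem exists_mem_negSide_simple_of_mem_parabolic {J : Set B} {v : W} (hv : v ∈ parabolic cs J)
    (hv₁ : v ≠ 1) : ∃ i ∈ J, v ∈ N (s i) := by
  obtain ⟨ω, hωJ, hω, rfl⟩ := exists_isReduced_of_mem_parabolic hv
  cases ω with
  | nil => simp at hv₁
  | cons i ω =>
    refine ⟨i, hωJ i List.mem_cons_self, ?_⟩
    rw [mem_negSide_iff, hω, cs.wordProd_cons, cs.simple_mul_simple_cancel_left, List.length_cons]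
    exact Nat.lt_succ_of_le (cs.length_wordProd_le ω)

theorem mem_parabolic_of_mem_negSide {J : Set B} {v r : W} (hr : cs.IsReflection r)
    (hv : v ∈ parabolic cs J) (hvr : v ∈ N r) : r ∈ parabolic cs J := by
  induction hv using parabolic_induction generalizing r with
  | one => exact absurd hvr (one_notMem_negSide r)
  | mul_simple_left v _ i hi ih =>
    have hsi : s i ∈ parabolic cs J := simple_mem_parabolic hi
    rw [mul_mem_negSide_iff hr, simple_mem_negSide_iff hr] at hvr
    by_cases hri : r = s i
    · rwa [hri]
    · have hconj := ih (isReflection_inv_conj hr (s i)) (by tauto)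
      rwa [Subgroup.mul_mem_cancel_right _ hsi,
        Subgroup.mul_mem_cancel_left _ (inv_mem hsi)] at hconj

/-- `d` is a shortest element of its coset `W_J d`. -/
def IsLeftReduced (cs : CoxeterSystem M W) (J : Set B) (d : W) : Prop :=
  ∀ v ∈ parabolic cs J, cs.length d ≤ cs.length (v * d)

theorem exists_eq_mul_isLeftReduced (J : Set B) (w : W) :
    ∃ v ∈ parabolic cs J, ∃ d, IsLeftReduced cs J d ∧ w = v * d := by
  obtain ⟨v, hv, hmin⟩ := exists_minimalFor_of_wellFoundedLT (· ∈ parabolic cs J)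
    (fun v ↦ ℓ (v * w)) ⟨1, one_mem _⟩
  refine ⟨v⁻¹, inv_mem hv, v * w, fun u hu ↦ ?_, by group⟩
  rw [← mul_assoc]
  by_contra! hlt
  exact hlt.not_ge (hmin (mul_mem hu hv) hlt.le)

namespace IsLeftReduced

variable {J K : Set B} {d f r v w : W}

theorem notMem_negSide (hd : IsLeftReduced cs J d) (hrJ : r ∈ parabolic cs J) : d ∉ N r :=
  (hd r hrJ).not_gt

theorem mul_mem_negSide_iff (hd : IsLeftReduced cs J d) (hr : cs.IsReflection r)
    (hrJ : r ∈ parabolic cs J) (hv : v ∈ parabolic cs J) : v * d ∈ N r ↔ v ∈ N r := by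
  have h := hd.notMem_negSide (mul_mem (mul_mem (inv_mem hv) hrJ) hv)
  rw [_root_.mul_mem_negSide_iff hr]
  tauto

theorem of_forall_simple (h : ∀ i ∈ J, d ∉ N (s i)) : IsLeftReduced cs J d := by
  obtain ⟨v, hv, d₀, hd₀, rfl⟩ := exists_eq_mul_isLeftReduced (cs := cs) J d
  obtain rfl | hv₁ := eq_or_ne v 1
  · rwa [one_mul]
  · obtain ⟨i, hi, hvi⟩ := exists_mem_negSide_simple_of_mem_parabolic hv hv₁
    exact absurd ((hd₀.mul_mem_negSide_iff (cs.isReflection_simple i)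
      (simple_mem_parabolic hi) hv).mpr hvi) (h i hi)

theorem mul_mem_negSide_of_inv (hf : IsLeftReduced cs K f⁻¹) (hv : v ∈ parabolic cs K)
    (hr : cs.IsReflection r) (hfr : f ∈ N r) : f * v ∈ N r := by
  have hr' := isReflection_inv_conj hr f
  refine (_root_.mul_mem_negSide_iff hr).mpr ⟨fun _ hvr ↦ ?_, fun _ ↦ hfr⟩
  refine hf.notMem_negSide (mem_parabolic_of_mem_negSide hr' hv hvr) ?_
  rwa [inv_mem_negSide_iff hr', show f * (f⁻¹ * r * f) * f⁻¹ = r by group]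

theorem of_mul_of_inv (hf : IsLeftReduced cs K f⁻¹) (hv : v ∈ parabolic cs K)
    (hfv : IsLeftReduced cs J (f * v)) : IsLeftReduced cs J f :=
  of_forall_simple fun i hi hfi ↦ hfv.notMem_negSide (simple_mem_parabolic hi)
    (hf.mul_mem_negSide_of_inv hv (cs.isReflection_simple i) hfi)

theorem mem_negSide_conj_iff (hf : IsLeftReduced cs K f⁻¹) (hr : cs.IsReflection r)
    (hrK : r ∈ parabolic cs K) : w ∈ N (f * r * f⁻¹) ↔ f⁻¹ * w ∈ N r := by
  have hfr : f ∉ N (f * r * f⁻¹) := by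
    rw [← inv_mem_negSide_iff hr]
    exact hf.notMem_negSide hrK
  rw [mem_negSide_iff_inv_mul_mem (hr.conj f) hfr,
    show f⁻¹ * (f * r * f⁻¹) * f = r by group]

end IsLeftReduced

/-! ### Descents when no two simple reflections commute -/

theorem simple_mul_simple_pow_ne_one {i j : B} (hij : i ≠ j) {p : ℕ} (hp : p.Prime)
    (hM : M i j ≠ p) : (s i * s j) ^ p ≠ 1 := by
  intro h
  have hdvd := orderOf_dvd_of_pow_eq_one h
  rw [orderOf_simple_mul_simple, Nat.dvd_prime hp] at hdvd
  exact hdvd.elim (M.off_diagonal i j hij) hM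

theorem simple_ne_simple {i j : B} (hij : i ≠ j) : s i ≠ s j := by
  intro h
  have hone := orderOf_simple_mul_simple cs i j
  rw [h, cs.simple_mul_simple_self, orderOf_one] at hone
  exact M.off_diagonal i j hij hone.symm

theorem simple_notMem_negSide {i j : B} (hij : i ≠ j) : s i ∉ N (s j) := by
  rw [simple_mem_negSide_iff (cs.isReflection_simple j)]
  exact simple_ne_simple hij.symm

theorem simple_conj_simple_ne {i j : B} (hij : i ≠ j) (hM : M i j ≠ 2) :
    s i * s j * s i ≠ s j := by
  intro h
  apply simple_mul_simple_pow_ne_one (cs := cs) hij Nat.prime_two hM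
  rw [pow_two, ← mul_assoc, h, cs.simple_mul_simple_self]

theorem simple_mul_simple_notMem_negSide {i j : B} (hij : i ≠ j) (hM : M i j ≠ 2) :
    s i * s j ∉ N (s j) := by
  have hj := cs.isReflection_simple j
  rw [mul_mem_negSide_iff hj, simple_mem_negSide_iff (isReflection_inv_conj hj _), cs.inv_simple]
  have := simple_notMem_negSide (cs := cs) hij
  have := simple_conj_simple_ne (cs := cs) hij hM
  tauto

theorem simple_mul_simple_mul_simple_notMem_negSide {i j : B} (hij : i ≠ j) (hM : M i j ≠ 2)
    (hM₃ : M i j ≠ 3) : s i * s j * s i ∉ N (s j) := by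
  have hj := cs.isReflection_simple j
  rw [mul_mem_negSide_iff hj, simple_mem_negSide_iff (isReflection_inv_conj hj _)]
  have hne : (s i * s j)⁻¹ * s j * (s i * s j) ≠ s i := by
    intro h
    apply simple_mul_simple_pow_ne_one (cs := cs) hij Nat.prime_three hM₃
    calc (s i * s j) ^ 3 = s i * ((s i * s j)⁻¹ * s j * (s i * s j)) := by
          simp [pow_succ, mul_assoc]
      _ = 1 := by rw [h, cs.simple_mul_simple_self]
  have := simple_mul_simple_notMem_negSide (cs := cs) hij hM
  tauto

theorem mul_mem_negSide_or_of_inv_notMem {i j : B} {x w : W} (hx : x ∈ parabolic cs {i, j})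
    (hxj : x⁻¹ ∉ N (s j)) (hwj : w ∈ N (s j)) : x * w ∈ N (s i) ∨ x * w ∈ N (s j) := by
  by_contra! h
  have hred : IsLeftReduced cs {i, j} (x * w) := .of_forall_simple (by simpa using h)
  have hiff := hred.mul_mem_negSide_iff (cs.isReflection_simple j)
    (simple_mem_parabolic (by simp)) (inv_mem hx)
  rw [inv_mul_cancel_left] at hiff
  exact hxj (hiff.mp hwj)

theorem simple_mul_mem_negSide {i j : B} (hij : i ≠ j) {w : W} (hwi : w ∈ N (s i))
    (hwj : w ∈ N (s j)) : s i * w ∈ N (s j) := by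
  have hi : s i ∈ parabolic cs {i, j} := simple_mem_parabolic (by simp)
  refine (mul_mem_negSide_or_of_inv_notMem hi ?_ hwj).resolve_left ?_
  · rw [cs.inv_simple]
    exact simple_notMem_negSide hij
  · simpa [self_mul_mem_negSide_iff (cs.isReflection_simple i)]

theorem simple_mul_simple_mul_mem_negSide {i j : B} (hij : i ≠ j) (hM : M i j ≠ 2) {w : W}
    (hwi : w ∈ N (s i)) (hwj : w ∈ N (s j)) : s j * (s i * w) ∈ N (s i) := by
  have hx : s j * s i ∈ parabolic cs {i, j} :=
    mul_mem (simple_mem_parabolic (by simp)) (simple_mem_parabolic (by simp))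
  rw [← mul_assoc]
  refine (mul_mem_negSide_or_of_inv_notMem hx ?_ hwj).resolve_right ?_
  · rw [mul_inv_rev, cs.inv_simple, cs.inv_simple]
    exact simple_mul_simple_notMem_negSide hij hM
  · rw [mul_assoc, self_mul_mem_negSide_iff (cs.isReflection_simple j), not_not]
    exact simple_mul_mem_negSide hij hwi hwj

theorem simple_mul_simple_mul_simple_mul_mem_negSide {i j : B} (hij : i ≠ j) (hM : M i j ≠ 2)
    (hM₃ : M i j ≠ 3) {w : W} (hwi : w ∈ N (s i)) (hwj : w ∈ N (s j)) :
    s i * (s j * (s i * w)) ∈ N (s j) := by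
  have hmem {l : B} (hl : l ∈ ({i, j} : Set B)) := simple_mem_parabolic (cs := cs) hl
  have hx : s i * s j * s i ∈ parabolic cs {i, j} :=
    mul_mem (mul_mem (hmem (by simp)) (hmem (by simp))) (hmem (by simp))
  rw [← mul_assoc, ← mul_assoc]
  refine (mul_mem_negSide_or_of_inv_notMem hx ?_ hwj).resolve_left ?_
  · simp only [mul_inv_rev, cs.inv_simple, ← mul_assoc]
    exact simple_mul_simple_mul_simple_notMem_negSide hij hM hM₃
  · rw [mul_assoc, mul_assoc, self_mul_mem_negSide_iff (cs.isReflection_simple i), not_not]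
    exact simple_mul_simple_mul_mem_negSide hij hM hwi hwj

theorem simple_mul_notMem_negSide (hM : ∀ i j, M i j ≠ 2) {i j k : B} (hij : i ≠ j) (hik : i ≠ k)
    (hjk : j ≠ k) {w : W} (hwi : w ∈ N (s i)) (hwj : w ∈ N (s j)) : s i * w ∉ N (s k) := by
  induction hn : ℓ w using Nat.strong_induction_on generalizing i j k w with
  | _ n ih =>
    subst hn
    intro hwk
    exact ih _ hwi hjk hij.symm hik.symm (simple_mul_mem_negSide hij hwi hwj) hwk rfl
      (simple_mul_simple_mul_mem_negSide hij (hM i j) hwi hwj)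

theorem eq_simple_of_mul_mem_negSide (hM : ∀ i j, M i j ≠ 2) {i j k : B} (hij : i ≠ j)
    (hik : i ≠ k) (hjk : j ≠ k) {v d : W} (hv : v ∈ parabolic cs {i, j})
    (hd : IsLeftReduced cs {i, j} d) (hk : v * d ∈ N (s k)) (hvi : v ∈ N (s i)) : v = s i := by
  by_contra hne
  have hi : s i ∈ parabolic cs {i, j} := simple_mem_parabolic (by simp)
  have hiv := mul_mem hi hv
  have hiv₁ : s i * v ≠ 1 := by
    rwa [Ne, mul_eq_one_iff_inv_eq, cs.inv_simple, eq_comm]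
  obtain ⟨l, rfl | rfl, hl⟩ := exists_mem_negSide_simple_of_mem_parabolic hiv hiv₁
  · exact (self_mul_mem_negSide_iff (cs.isReflection_simple _)).mp hl hvi
  · have hdi := (hd.mul_mem_negSide_iff (cs.isReflection_simple i) hi hv).mpr hvi
    have hdl := (hd.mul_mem_negSide_iff (cs.isReflection_simple l)
      (simple_mem_parabolic (by simp)) hiv).mpr hl
    rw [mul_assoc] at hdl
    exact simple_mul_notMem_negSide hM hik hij hjk.symm hdi hk hdl

theorem eq_one_or_simple_of_mul_mem_negSide (hM : ∀ i j, M i j ≠ 2) {i j k : B} (hij : i ≠ j)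
    (hik : i ≠ k) (hjk : j ≠ k) {v d : W} (hv : v ∈ parabolic cs {i, j})
    (hd : IsLeftReduced cs {i, j} d) (hk : v * d ∈ N (s k)) : v = 1 ∨ v = s i ∨ v = s j := by
  refine or_iff_not_imp_left.mpr fun hv₁ ↦ ?_
  obtain ⟨l, rfl | rfl, hl⟩ := exists_mem_negSide_simple_of_mem_parabolic hv hv₁
  · exact .inl (eq_simple_of_mul_mem_negSide hM hij hik hjk hv hd hk hl)
  · rw [Set.pair_comm] at hv hd
    exact .inr (eq_simple_of_mul_mem_negSide hM hij.symm hjk hik hv hd hk hl)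

theorem disjoint_negSide_simple (hM : ∀ i j, M i j ≠ 2) {i j k : B} (hij : i ≠ j) (hik : i ≠ k)
    (hjk : j ≠ k) {r : W} (hr : cs.IsReflection r) (hrij : r ∈ parabolic cs {i, j})
    (hri : r ≠ s i) (hrj : r ≠ s j) : Disjoint (N r) (N (s k)) := by
  refine Set.disjoint_left.mpr fun w hwr hwk ↦ ?_
  obtain ⟨v, hv, d, hd, rfl⟩ := exists_eq_mul_isLeftReduced (cs := cs) {i, j} w
  rw [hd.mul_mem_negSide_iff hr hrij hv] at hwr
  rcases eq_one_or_simple_of_mul_mem_negSide hM hij hik hjk hv hd hwk with rfl | rfl | rfl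
  · exact one_notMem_negSide r hwr
  · exact hri ((simple_mem_negSide_iff hr).mp hwr)
  · exact hrj ((simple_mem_negSide_iff hr).mp hwr)

/-! ### Half-spaces in rank three -/

theorem eq_or_eq_or_eq_of_card_eq_three [Fintype B] (hcard : Fintype.card B = 3) {i j k : B}
    (hij : i ≠ j) (hik : i ≠ k) (hjk : j ≠ k) (l : B) : l = i ∨ l = j ∨ l = k := by
  classical
  have huniv : ({i, j, k} : Finset B) = Finset.univ := by
    rw [← Finset.card_eq_iff_eq_univ, hcard, Finset.card_eq_three]
    exact ⟨i, j, k, hij, hik, hjk, rfl⟩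
  simpa using huniv.symm.subset (Finset.mem_univ l)

theorem exists_third_of_card_eq_three [Fintype B] (hcard : Fintype.card B = 3) (i j : B) :
    ∃ k, i ≠ k ∧ j ≠ k := by
  classical
  have hlt : ({i, j} : Finset B).card < (Finset.univ : Finset B).card :=
    Finset.card_le_two.trans_lt (by rw [Finset.card_univ, hcard]; norm_num)
  obtain ⟨k, -, hk⟩ := Finset.exists_mem_notMem_of_card_lt_card hlt
  refine ⟨k, ?_, ?_⟩ <;> rintro rfl <;> simp at hk

theorem exists_mem_negSide_simple_of_ne_one {w : W} (hw : w ≠ 1) : ∃ i, w ∈ N (s i) :=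
  cs.exists_leftDescent_of_ne_one hw

theorem exists_eq_mul_isLeftReduced_inv {d : W} (hd : d ≠ 1) {i : B} (hdi : ℓ d < ℓ (d * s i)) :
    ∃ j, i ≠ j ∧ ∃ v ∈ parabolic cs {i, j}, ∃ f, IsLeftReduced cs {i, j} f⁻¹ ∧ d = f * v ∧
      ℓ f < ℓ d := by
  obtain ⟨j, hj⟩ := cs.exists_rightDescent_of_ne_one hd
  obtain ⟨v, hv, f, hf, hdf⟩ := exists_eq_mul_isLeftReduced (cs := cs) {i, j} d⁻¹
  refine ⟨j, ?_, v⁻¹, inv_mem hv, f⁻¹, by rwa [inv_inv], by rw [← mul_inv_rev, ← hdf, inv_inv], ?_⟩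
  · rintro rfl
    exact hj.asymm hdi
  · calc ℓ f⁻¹ = ℓ f := cs.length_inv f
      _ ≤ ℓ (s j * v * f) := hf _ (mul_mem (simple_mem_parabolic (by simp)) hv)
      _ = ℓ (d * s j) := by rw [mul_assoc, ← hdf, ← cs.length_inv (d * s j)]; simp
      _ < ℓ d := hj

theorem IsLeftReduced.negSide_conj_subset {K : Set B} {f q r : W} (hf : IsLeftReduced cs K f⁻¹)
    (hq : cs.IsReflection q) (hqK : q ∈ parabolic cs K) (hr : cs.IsReflection r)
    (hfr : f⁻¹ ∈ N r) (hqr : Disjoint (N q) (N r)) : N (f * q * f⁻¹) ⊆ N (f * r * f⁻¹) := by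
  intro w hw
  rw [hf.mem_negSide_conj_iff hq hqK] at hw
  have h := _root_.mul_mem_negSide_iff (hr.conj f) (v := f) (w := f⁻¹ * w)
  rw [mul_inv_cancel_left, ← inv_mem_negSide_iff hr,
    show f⁻¹ * (f * r * f⁻¹) * f = r by group] at h
  exact h.mpr ⟨fun _ ↦ Set.disjoint_left.mp hqr hw, fun _ ↦ hfr⟩

/-- The half-space `N r` is separated from the vertex of type `{i, j}` of the base chamber: it lies
beyond the wall of `s k` opposite to that vertex, or it misses one of the half-spaces bounded by the
two walls through that vertex. -/
def SeparatedFrom (cs : CoxeterSystem M W) (i j k : B) (r : W) : Prop :=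
  negSide cs r ⊆ negSide cs (cs.simple k) ∨ Disjoint (negSide cs r) (negSide cs (cs.simple i)) ∨
    Disjoint (negSide cs r) (negSide cs (cs.simple j))

theorem SeparatedFrom.mono {i j k : B} {q r : W} (hq : SeparatedFrom cs i j k q)
    (hrq : N r ⊆ N q) : SeparatedFrom cs i j k r :=
  hq.imp hrq.trans (.imp (.mono_left hrq) (.mono_left hrq))

theorem separatedFrom_of_mem_parabolic [Fintype B] (hcard : Fintype.card B = 3)
    (hM : ∀ i j, M i j ≠ 2) {i j k x y z : B} (hij : i ≠ j) (hik : i ≠ k) (hjk : j ≠ k)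
    (hxy : x ≠ y) (hxz : x ≠ z) (hyz : y ≠ z) {r : W} (hr : cs.IsReflection r)
    (hrxy : r ∈ parabolic cs {x, y}) (hrij : r ∉ parabolic cs {i, j})
    (hrx : r ≠ s x) (hry : r ≠ s y) : SeparatedFrom cs i j k r := by
  have hdisj := disjoint_negSide_simple hM hxy hxz hyz hr hrxy hrx hry
  have hB := eq_or_eq_or_eq_of_card_eq_three hcard hij hik hjk
  obtain rfl | rfl | rfl := hB z
  · exact .inr (.inl hdisj)
  · exact .inr (.inr hdisj)
  · refine absurd (parabolic_mono ?_ hrxy) hrij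
    rintro l (rfl | rfl) <;> have := hB l <;> simp only [Set.mem_insert_iff,
      Set.mem_singleton_iff] <;> tauto

theorem separatedFrom_conj [Fintype B] (hcard : Fintype.card B = 3) (hM : ∀ i j, M i j ≠ 2)
    {i j k x y : B} (hij : i ≠ j) (hik : i ≠ k) (hjk : j ≠ k) (hxy : x ≠ y) {f q : W}
    (hf : IsLeftReduced cs {i, j} f) (hf' : IsLeftReduced cs {x, y} f⁻¹) (hq : cs.IsReflection q)
    (hqxy : q ∈ parabolic cs {x, y}) (hqij : f * q * f⁻¹ ∉ parabolic cs {i, j})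
    (ih : ∀ g r, ℓ g ≤ ℓ f + 1 → IsLeftReduced cs {i, j} g → cs.IsReflection r → g ∈ N r →
      SeparatedFrom cs i j k r) :
    SeparatedFrom cs i j k (f * q * f⁻¹) := by
  obtain ⟨z, hxz, hyz⟩ := exists_third_of_card_eq_three hcard x y
  by_cases hsimple : ∃ a, q = s a
  · obtain ⟨a, rfl⟩ := hsimple
    have hlen : ℓ (f * s a) ≤ ℓ f + 1 := (cs.length_mul_le _ _).trans_eq (by rw [cs.length_simple])
    refine ih (f * s a) _ hlen ?_ (hq.conj f) ?_
    · refine .of_forall_simple fun l hl hfl ↦ hqij ?_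
      have hlmem := simple_mem_parabolic (cs := cs) hl
      rwa [← eq_conj_of_mem_negSide_mul_simple (cs.isReflection_simple l)
        (hf.notMem_negSide hlmem) hfl]
    · rw [hf'.mem_negSide_conj_iff hq hqxy, inv_mul_cancel_left]
      exact self_mem_negSide hq
  push Not at hsimple
  by_cases hf₁ : f = 1
  · subst hf₁
    rw [one_mul, inv_one, mul_one] at hqij ⊢
    exact separatedFrom_of_mem_parabolic hcard hM hij hik hjk hxy hxz hyz hq hqxy hqij
      (hsimple x) (hsimple y)
  · obtain ⟨l, hl⟩ := exists_mem_negSide_simple_of_ne_one (inv_ne_one.mpr hf₁)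
    have hlxy : l ∉ ({x, y} : Set B) := fun h ↦ hf'.notMem_negSide (simple_mem_parabolic h) hl
    obtain rfl : l = z := by
      have := eq_or_eq_or_eq_of_card_eq_three hcard hxy hxz hyz l
      simp only [Set.mem_insert_iff, Set.mem_singleton_iff] at hlxy
      tauto
    have hsl := cs.isReflection_simple l
    have hdisj := disjoint_negSide_simple hM hxy hxz hyz hq hqxy (hsimple x) (hsimple y)
    refine (ih f _ (Nat.le_succ _) hf (hsl.conj f) ?_).mono
      (hf'.negSide_conj_subset hq hqxy hsl hl hdisj)
    rwa [← inv_mem_negSide_iff hsl]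

theorem separatedFrom_of_isLeftReduced [Fintype B] (hcard : Fintype.card B = 3)
    (hM : ∀ i j, M i j ≠ 2) {i j k : B} (hij : i ≠ j) (hik : i ≠ k) (hjk : j ≠ k) {d r : W}
    (hd : IsLeftReduced cs {i, j} d) (hr : cs.IsReflection r) (hdr : d ∈ N r) :
    SeparatedFrom cs i j k r := by
  induction hn : ℓ d using Nat.strong_induction_on generalizing d r with
  | _ n ih =>
  subst hn
  have hrij : r ∉ parabolic cs {i, j} := fun h ↦ hd.notMem_negSide h hdr
  have hd₁ : d ≠ 1 := by
    rintro rfl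
    exact one_notMem_negSide r hdr
  obtain ⟨x, hx⟩ := cs.exists_rightDescent_of_ne_one hd₁
  obtain ⟨e, rfl⟩ : ∃ e, d = e * s x := ⟨d * s x, by simp⟩
  rw [CoxeterSystem.IsRightDescent, cs.simple_mul_simple_cancel_right] at hx
  have he : IsLeftReduced cs {i, j} e := by
    refine .of_mul_of_inv (K := {x}) (.of_forall_simple ?_) (simple_mem_parabolic rfl) hd
    simp only [Set.mem_singleton_iff, forall_eq]
    intro hex
    rw [inv_mem_negSide_iff (cs.isReflection_simple x), mem_negSide_iff,
      inv_mul_cancel_right] at hex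
    exact hex.asymm hx
  by_cases her : e ∈ N r
  · exact ih _ hx he hr her rfl
  have hre := eq_conj_of_mem_negSide_mul_simple hr her hdr
  by_cases he₁ : e = 1
  · subst he₁
    rw [one_mul, inv_one, mul_one] at hre
    subst hre
    obtain rfl | rfl | rfl := eq_or_eq_or_eq_of_card_eq_three hcard hij hik hjk x
    · exact absurd (simple_mem_parabolic (by simp)) hrij
    · exact absurd (simple_mem_parabolic (by simp)) hrij
    · exact .inl subset_rfl
  obtain ⟨y, hxy, v, hv, f, hf, rfl, hfl⟩ := exists_eq_mul_isLeftReduced_inv he₁ hx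
  have hvx : v * s x * v⁻¹ ∈ parabolic cs {x, y} :=
    mul_mem (mul_mem hv (simple_mem_parabolic (by simp))) (inv_mem hv)
  obtain rfl : r = f * (v * s x * v⁻¹) * f⁻¹ := by
    rw [hre]
    group
  exact separatedFrom_conj hcard hM hij hik hjk hxy (hf.of_mul_of_inv hv he) hf
    ((cs.isReflection_simple x).conj v) hvx hrij
    fun g q hg hgred hq hgq ↦ ih _ (by omega) hgred hq hgq rfl

/-! ### Walls crossing a rank two residue -/

theorem negSide_simple_induction {i : B} {p : W → Prop} (simple : p (s i))
    (mul_simple : ∀ w j, w ∈ N (s i) → w * s j ∈ N (s i) → p w → p (w * s j))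
    {w : W} (hw : w ∈ N (s i)) : p w := by
  induction hn : ℓ w using Nat.strong_induction_on generalizing w with
  | _ n ih =>
  subst hn
  rw [mem_negSide_iff] at hw
  by_cases hiw : s i * w = 1
  · rwa [mul_eq_one_iff_eq_inv'.mp hiw, cs.inv_simple]
  obtain ⟨j, hj⟩ := cs.exists_rightDescent_of_ne_one hiw
  rw [CoxeterSystem.IsRightDescent, mul_assoc] at hj
  have hlen := cs.length_mul_simple w j
  have hlen' := cs.length_simple_mul (w * s j) i
  have hwj : w * s j ∈ N (s i) := by
    rw [mem_negSide_iff]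
    omega
  have hpwj := mul_simple (w * s j) j hwj (by rwa [cs.simple_mul_simple_cancel_right])
    (ih _ (by omega) hwj rfl)
  rwa [cs.simple_mul_simple_cancel_right] at hpwj

theorem exists_eq_conj_of_isReflection {r : W} (hr : cs.IsReflection r) :
    ∃ z i, r = z * s i * z⁻¹ ∧ z ∉ N r := by
  obtain ⟨z, i, hz⟩ := id hr
  by_cases h : z ∈ N r
  · refine ⟨r * z, i, ?_, by rwa [self_mul_mem_negSide_iff hr, not_not]⟩
    rw [hz]
    group
  · exact ⟨z, i, hz, h⟩

theorem negSide_connected {r : W} (hr : cs.IsReflection r) {p : W → Prop}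
    (hp : ∀ w i, w ∈ N r → w * s i ∈ N r → p w → p (w * s i)) {w w' : W} (hw : w ∈ N r)
    (hw' : w' ∈ N r) (hpw : p w) : p w' := by
  obtain ⟨z, i, hrz, hz⟩ := exists_eq_conj_of_isReflection hr
  have hmem (u : W) : u ∈ N (s i) ↔ z * u ∈ N r := by
    rw [mem_negSide_iff_inv_mul_mem hr hz, inv_mul_cancel_left,
      show z⁻¹ * r * z = s i by rw [hrz]; group]
  have hback : p (z * s i) := by
    have h := negSide_simple_induction (cs := cs) (i := i) (p := fun u ↦ p (z * u) → p (z * s i))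
      id ?_ ((hmem (z⁻¹ * w)).mpr (by rwa [mul_inv_cancel_left]))
    · exact h (by rwa [mul_inv_cancel_left])
    · intro u j hu huj hpu hpuj
      refine hpu ?_
      have := hp _ j ((hmem _).mp huj) ?_ hpuj
      · rwa [mul_assoc, cs.simple_mul_simple_cancel_right] at this
      · rw [mul_assoc, cs.simple_mul_simple_cancel_right]
        exact (hmem u).mp hu
  have h := negSide_simple_induction (cs := cs) (i := i) (p := fun u ↦ p (z * u)) hback
    ?_ ((hmem (z⁻¹ * w')).mpr (by rwa [mul_inv_cancel_left]))
  · rwa [mul_inv_cancel_left] at h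
  · intro u j hu huj hpu
    rw [← mul_assoc]
    exact hp _ j ((hmem u).mp hu) (by rw [mul_assoc]; exact (hmem _).mp huj) hpu

/-- The wall of `q` cuts through the half-space `negSide cs r`. -/
def Crosses (cs : CoxeterSystem M W) (r q : W) : Prop :=
  (negSide cs r ∩ negSide cs q).Nonempty ∧ (negSide cs r \ negSide cs q).Nonempty

theorem Crosses.eq_conj {J : Set B} {i : B} (hi : i ∈ J) {c r q : W} (hrq : Crosses cs r q)
    (hc : c ∈ parabolic cs J) (hq : cs.IsReflection q) (hqJ : q ∈ parabolic cs J)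
    (hproj : ∀ w ∈ N r, IsLeftReduced cs J (c⁻¹ * w) ∨ IsLeftReduced cs J ((c * s i)⁻¹ * w)) :
    q = c * s i * c⁻¹ := by
  obtain ⟨⟨w, hwr, hwq⟩, ⟨w', hwr', hwq'⟩⟩ := hrq
  have hiff {v u : W} (hv : v ∈ parabolic cs J) (hred : IsLeftReduced cs J (v⁻¹ * u)) :
      u ∈ N q ↔ v ∈ N q := by
    simpa only [mul_inv_cancel_left] using hred.mul_mem_negSide_iff hq hqJ hv
  have hside {u : W} (hu : u ∈ N r) : (u ∈ N q ↔ c ∈ N q) ∨ (u ∈ N q ↔ c * s i ∈ N q) :=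
    (hproj u hu).imp (hiff hc) (hiff (mul_mem hc (simple_mem_parabolic hi)))
  have hw := hside hwr
  have hw' := hside hwr'
  by_cases hcq : c ∈ N q
  · have hciq : c * s i ∉ N q := by tauto
    rw [eq_conj_of_mem_negSide_mul_simple hq hciq (by rwa [cs.simple_mul_simple_cancel_right])]
    simp [mul_assoc]
  · exact eq_conj_of_mem_negSide_mul_simple hq hcq (by tauto)

theorem isLeftReduced_or_of_forall_notMem {i j : B} {c r w₀ : W} (hr : cs.IsReflection r)
    (hw₀ : w₀ ∈ N r) (hred : IsLeftReduced cs {i, j} (c⁻¹ * w₀))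
    (hcj : ∀ w ∈ N r, c⁻¹ * w ∉ N (s j))
    (hci : ∀ w ∈ N r, IsLeftReduced cs {i, j} ((c * s i)⁻¹ * w) →
      ∀ u ∈ N r, (c * s i)⁻¹ * u ∉ N (s j)) :
    ∀ w ∈ N r, IsLeftReduced cs {i, j} (c⁻¹ * w) ∨ IsLeftReduced cs {i, j} ((c * s i)⁻¹ * w) := by
  have hred_iff (d : W) : IsLeftReduced cs {i, j} d ↔ d ∉ N (s i) ∧ d ∉ N (s j) :=
    ⟨fun h ↦ ⟨h.notMem_negSide (simple_mem_parabolic (by simp)),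
      h.notMem_negSide (simple_mem_parabolic (by simp))⟩,
    fun h ↦ .of_forall_simple (by simpa using h)⟩
  have hcsi (w : W) : (c * s i)⁻¹ * w ∈ N (s i) ↔ c⁻¹ * w ∉ N (s i) := by
    rw [mul_inv_rev, cs.inv_simple, mul_assoc,
      self_mul_mem_negSide_iff (cs.isReflection_simple i)]
  intro w hw
  by_cases hex : ∃ u ∈ N r, IsLeftReduced cs {i, j} ((c * s i)⁻¹ * u)
  · obtain ⟨u, hu, hured⟩ := hex
    have hwj := hci u hu hured w hw
    have hwj' := hcj w hw
    rw [hred_iff, hred_iff, hcsi]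
    tauto
  · push Not at hex
    refine .inl (negSide_connected hr (p := fun u ↦ IsLeftReduced cs {i, j} (c⁻¹ * u)) ?_ hw₀ hw
      hred)
    intro u l _ hul hured
    rw [hred_iff]
    refine ⟨fun huli ↦ hex _ hul ?_, hcj _ hul⟩
    rw [← mul_assoc] at huli
    have hconj := eq_conj_of_mem_negSide_mul_simple (cs.isReflection_simple i)
      ((hred_iff _).mp hured).1 huli
    rwa [mul_inv_rev, cs.inv_simple, hconj, show c⁻¹ * u * s l * (c⁻¹ * u)⁻¹ * c⁻¹ * (u * s l) =
      c⁻¹ * u * (s l * s l) by group, cs.simple_mul_simple_self, mul_one]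

theorem eq_of_crosses_of_forall_notMem {i j : B} {c r r₁ r₂ w₀ : W} (hr : cs.IsReflection r)
    (hr₁ : cs.IsReflection r₁) (hr₂ : cs.IsReflection r₂) (hm₁ : r₁ ∈ parabolic cs {i, j})
    (hm₂ : r₂ ∈ parabolic cs {i, j}) (h₁ : Crosses cs r r₁) (h₂ : Crosses cs r r₂)
    (hc : c ∈ parabolic cs {i, j}) (hw₀ : w₀ ∈ N r) (hred : IsLeftReduced cs {i, j} (c⁻¹ * w₀))
    (hcj : ∀ w ∈ N r, c⁻¹ * w ∉ N (s j))
    (hend : ∀ c ∈ parabolic cs {i, j}, ∀ w ∈ N r, IsLeftReduced cs {i, j} (c⁻¹ * w) →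
      (∀ u ∈ N r, c⁻¹ * u ∉ N (s i)) ∨ ∀ u ∈ N r, c⁻¹ * u ∉ N (s j)) : r₁ = r₂ := by
  have hi : s i ∈ parabolic cs {i, j} := simple_mem_parabolic (by simp)
  have hproj := isLeftReduced_or_of_forall_notMem hr hw₀ hred hcj fun w hw hwred ↦ by
    refine (hend _ (mul_mem hc hi) w hw hwred).resolve_left fun h ↦ h w₀ hw₀ ?_
    rw [mul_inv_rev, cs.inv_simple, mul_assoc,
      self_mul_mem_negSide_iff (cs.isReflection_simple i)]
    exact hred.notMem_negSide hi
  rw [h₁.eq_conj (by simp) hc hr₁ hm₁ hproj, h₂.eq_conj (by simp) hc hr₂ hm₂ hproj]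

theorem exists_inner_of_crosses {i j : B} {r r₁ r₂ : W} (hr : cs.IsReflection r)
    (hr₁ : cs.IsReflection r₁) (hr₂ : cs.IsReflection r₂) (hm₁ : r₁ ∈ parabolic cs {i, j})
    (hm₂ : r₂ ∈ parabolic cs {i, j}) (hne : r₁ ≠ r₂) (h₁ : Crosses cs r r₁)
    (h₂ : Crosses cs r r₂) :
    ∃ c ∈ parabolic cs {i, j}, (∃ w ∈ N r, IsLeftReduced cs {i, j} (c⁻¹ * w)) ∧
      (∃ w ∈ N r, c⁻¹ * w ∈ N (s i)) ∧ ∃ w ∈ N r, c⁻¹ * w ∈ N (s j) := by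
  by_contra! hcon
  have hend : ∀ c ∈ parabolic cs {i, j}, ∀ w ∈ N r, IsLeftReduced cs {i, j} (c⁻¹ * w) →
      (∀ u ∈ N r, c⁻¹ * u ∉ N (s i)) ∨ ∀ u ∈ N r, c⁻¹ * u ∉ N (s j) := by
    intro c hc w hw hred
    refine or_iff_not_imp_left.mpr fun hi ↦ ?_
    push Not at hi
    exact hcon c hc ⟨w, hw, hred⟩ hi
  obtain ⟨w₀, hw₀, -⟩ := h₁.1
  obtain ⟨c, hc, d, hd, hcd⟩ := exists_eq_mul_isLeftReduced (cs := cs) {i, j} w₀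
  obtain rfl : d = c⁻¹ * w₀ := by rw [hcd, inv_mul_cancel_left]
  rcases hend c hc w₀ hw₀ hd with hci | hcj
  · rw [Set.pair_comm] at hm₁ hm₂ hc hd
    simp only [Set.pair_comm i j] at hend
    exact hne (eq_of_crosses_of_forall_notMem hr hr₁ hr₂ hm₁ hm₂ h₁ h₂ hc hw₀ hd hci
      fun c hc w hw hred ↦ (hend c hc w hw hred).symm)
  · exact hne (eq_of_crosses_of_forall_notMem hr hr₁ hr₂ hm₁ hm₂ h₁ h₂ hc hw₀ hd hcj hend)

/-! ### The wall opposite to a rank two residue -/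

theorem exists_length_mul_lt (hM : ∀ i j, M i j ≠ 2) {i j k : B} (hij : i ≠ j) (hik : i ≠ k)
    (hjk : j ≠ k) {v w : W} (hv : v ∈ parabolic cs {i, j}) (hw : w ∈ N (s k)) :
    ∃ u ∈ parabolic cs {i, j}, ℓ (u * (s k * w)) < ℓ (v * w) := by
  obtain ⟨p, hp, d, hd, rfl⟩ := exists_eq_mul_isLeftReduced (cs := cs) {i, j} w
  have hle : ℓ d ≤ ℓ (v * (p * d)) := by
    rw [← mul_assoc]
    exact hd _ (mul_mem hv hp)
  have hsimple (l : B) (hl : l ∈ ({i, j} : Set B)) (hkl : k ≠ l) (hpl : p = s l) :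
      ∃ u ∈ parabolic cs {i, j}, ℓ (u * (s k * (p * d))) < ℓ (v * (p * d)) := by
    subst hpl
    have hlmem := simple_mem_parabolic (cs := cs) hl
    have hld : s l * d ∈ N (s l) :=
      (self_mul_mem_negSide_iff (cs.isReflection_simple l)).mpr (hd.notMem_negSide hlmem)
    have hkld := simple_mul_mem_negSide hkl hw hld
    have hlen := cs.length_simple_mul d l
    rw [mem_negSide_iff] at hw hkld
    exact ⟨s l, hlmem, by omega⟩
  obtain rfl | hpi | hpj := eq_one_or_simple_of_mul_mem_negSide hM hij hik hjk hp hd hw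
  · rw [one_mul] at hw hle ⊢
    exact ⟨1, one_mem _, by simpa using hw.trans_le hle⟩
  · exact hsimple i (by simp) hik.symm hpi
  · exact hsimple j (by simp) hjk.symm hpj

theorem exists_simple_mul_eq_mul (hM : ∀ i j, M i j ≠ 2) {i j k : B} (hij : i ≠ j) (hik : i ≠ k)
    (hjk : j ≠ k) {w : W} (hwi : w ∈ N (s i)) (hwk : w ∈ N (s k)) :
    ∃ p ∈ parabolic cs {i, j}, ∃ d, IsLeftReduced cs {i, j} d ∧ s k * w = p * d ∧
      (p = s i ∨ p = s i * s j ∧ M k i = 3) := by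
  have hi : s i ∈ parabolic cs {i, j} := simple_mem_parabolic (by simp)
  obtain ⟨p, hp, d, hd, hpd⟩ := exists_eq_mul_isLeftReduced (cs := cs) {i, j} (s k * w)
  refine ⟨p, hp, d, hd, hpd, ?_⟩
  have hyi : s k * w ∈ N (s i) := simple_mul_mem_negSide hik.symm hwk hwi
  have hik_mem : s i * (s k * w) ∈ N (s k) :=
    simple_mul_simple_mul_mem_negSide hik.symm (hM k i) hwk hwi
  have hip := mul_mem hi hp
  have hipd : s i * p * d ∈ N (s k) := by rwa [mul_assoc, ← hpd]
  have hcancel {x : W} (hx : s i * p = x) : p = s i * x := by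
    rw [← hx, cs.simple_mul_simple_cancel_left]
  obtain h₁ | h₁ | h₁ := eq_one_or_simple_of_mul_mem_negSide hM hij hik hjk hip hd hipd
  · exact .inl (by rw [hcancel h₁, mul_one])
  · have hp₁ : p = 1 := by rw [hcancel h₁, cs.simple_mul_simple_self]
    rw [hpd, hp₁, one_mul] at hyi
    exact absurd hyi (hd.notMem_negSide hi)
  · refine .inr ⟨hcancel h₁, by_contra fun hM₃ ↦ ?_⟩
    have hij_mem : s i * (s k * w) ∈ N (s j) := by
      rw [hpd, ← mul_assoc, h₁, self_mul_mem_negSide_iff (cs.isReflection_simple j)]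
      exact hd.notMem_negSide (simple_mem_parabolic (by simp))
    exact simple_mul_notMem_negSide hM hjk.symm hik.symm hij.symm hik_mem hij_mem
      (simple_mul_simple_mul_simple_mul_mem_negSide hik.symm (hM k i) hM₃ hwk hwi)

/-- `x` is an element of `W_{i,j}` of length at most three starting with `s i`, where length three
is only allowed if `m_{ki} = 3`. -/
def IsShortFrom (cs : CoxeterSystem M W) (i j k : B) (x : W) : Prop :=
  x = cs.simple i ∨ x = cs.simple i * cs.simple j ∨
    x = cs.simple i * cs.simple j * cs.simple i ∧ M k i = 3

theorem IsShortFrom.mem_negSide {i j k : B} (hij : i ≠ j) (hM : M j i ≠ 2) {x : W}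
    (hx : IsShortFrom cs i j k x) : x ∈ N (s i) := by
  obtain rfl | rfl | ⟨rfl, -⟩ := hx
  · exact self_mem_negSide (cs.isReflection_simple i)
  · rw [self_mul_mem_negSide_iff (cs.isReflection_simple i)]
    exact simple_notMem_negSide hij.symm
  · rw [mul_assoc, self_mul_mem_negSide_iff (cs.isReflection_simple i)]
    exact simple_mul_simple_notMem_negSide hij.symm hM

theorem IsShortFrom.eq_three_of_mem_negSide {i j k : B} (hij : i ≠ j) (hM : M i j ≠ 2) {x : W}
    (hx : IsShortFrom cs i j k x) (hxj : x ∈ N (s j)) : M i j = 3 ∧ M k i = 3 := by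
  obtain rfl | rfl | ⟨rfl, hki⟩ := hx
  · exact absurd hxj (simple_notMem_negSide hij)
  · exact absurd hxj (simple_mul_simple_notMem_negSide hij hM)
  · refine ⟨by_contra fun hM₃ ↦ ?_, hki⟩
    exact simple_mul_simple_mul_simple_notMem_negSide hij hM hM₃ hxj

theorem IsShortFrom.eq_three_of_swap (hM : ∀ i j, M i j ≠ 2) {i j k : B} (hij : i ≠ j) {x : W}
    (hx : IsShortFrom cs i j k x) (hx' : IsShortFrom cs j i k x) :
    M i j = 3 ∧ M k i = 3 ∧ M k j = 3 :=
  have hi := hx.eq_three_of_mem_negSide hij (hM i j) (hx'.mem_negSide hij.symm (hM i j))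
  have hj := hx'.eq_three_of_mem_negSide hij.symm (hM j i) (hx.mem_negSide hij (hM j i))
  ⟨hi.1, hi.2, hj.2⟩

theorem isShortFrom_of_mem_parabolic (hM : ∀ i j, M i j ≠ 2) {i j k : B} (hij : i ≠ j)
    (hik : i ≠ k) (hjk : j ≠ k) {q w : W} (hq : cs.IsReflection q)
    (hqij : q ∈ parabolic cs {i, j}) (hwi : w ∈ N (s i)) (hwk : w ∈ N (s k))
    (hwq : s k * w ∈ N q) : IsShortFrom cs i j k q := by
  obtain ⟨p, hp, d, hd, hpd, hcases⟩ := exists_simple_mul_eq_mul hM hij hik hjk hwi hwk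
  rw [hpd, hd.mul_mem_negSide_iff hq hqij hp] at hwq
  obtain rfl | ⟨rfl, hki⟩ := hcases
  · exact .inl ((simple_mem_negSide_iff hq).mp hwq)
  · by_cases hqi : s i ∈ N q
    · exact .inl ((simple_mem_negSide_iff hq).mp hqi)
    · refine .inr (.inr ⟨?_, hki⟩)
      rw [eq_conj_of_mem_negSide_mul_simple hq hqi hwq, cs.inv_simple]

theorem isShortFrom_of_conj (hM : ∀ i j, M i j ≠ 2) {i j k : B} (hij : i ≠ j) (hik : i ≠ k)
    (hjk : j ≠ k) {c w : W} (hc : c ∈ parabolic cs {i, j}) (hck : c ∉ N (c * s k * c⁻¹))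
    (hwi : w ∈ N (s i)) (hwk : w ∈ N (s k)) (hw : s k * w ∈ N (c * s k * c⁻¹)) :
    IsShortFrom cs i j k c := by
  have hk := cs.isReflection_simple k
  obtain ⟨p, hp, d, hd, hpd, hcases⟩ := exists_simple_mul_eq_mul hM hij hik hjk hwi hwk
  rw [mem_negSide_iff_inv_mul_mem (hk.conj c) hck,
    show c⁻¹ * (c * s k * c⁻¹) * c = s k by group] at hw
  have hc₁ : c ≠ 1 := by
    rintro rfl
    rw [inv_one, one_mul, self_mul_mem_negSide_iff hk] at hw
    exact hw hwk
  rw [hpd, ← mul_assoc] at hw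
  have hcp := eq_one_or_simple_of_mul_mem_negSide hM hij hik hjk (mul_mem (inv_mem hc) hp) hd hw
  have hcancel {l : B} (hl : c⁻¹ * p = s l) : c = p * s l := by
    rw [← cs.inv_simple, ← hl]
    group
  replace hcp := hcp.imp inv_mul_eq_one.mp (Or.imp hcancel hcancel)
  obtain rfl | ⟨rfl, hki⟩ := hcases
  · rw [cs.simple_mul_simple_self] at hcp
    exact hcp.imp_right fun h ↦ .inl (h.resolve_left hc₁)
  · rw [cs.simple_mul_simple_cancel_right] at hcp
    unfold IsShortFrom
    tauto

theorem eq_simple_of_negSide_subset (hM : ∀ i j, M i j ≠ 2) {i j k : B} (hij : i ≠ j)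
    (hik : i ≠ k) (hjk : j ≠ k) (hM₃ : ¬(M i j = 3 ∧ M k i = 3 ∧ M k j = 3)) {r : W}
    (hr : cs.IsReflection r) (hrk : N r ⊆ N (s k)) (hri : (N r ∩ N (s i)).Nonempty)
    (hrj : (N r ∩ N (s j)).Nonempty)
    (ih : ∀ q, cs.IsReflection q → (∀ w ∈ N r, s k * w ∈ N q) →
      (∀ v ∈ parabolic cs {i, j}, v ∉ N q) → Crosses cs q (s i) → Crosses cs q (s j) →
      ∃ c ∈ parabolic cs {i, j}, q = c * s k * c⁻¹) :
    r = s k := by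
  by_contra hne
  obtain ⟨w, hw, hwi⟩ := hri
  obtain ⟨u, hu, huj⟩ := hrj
  have hkr : s k ∉ N r := by rwa [simple_mem_negSide_iff hr]
  obtain ⟨q, hq, hrq⟩ : ∃ q, cs.IsReflection q ∧ ∀ w ∈ N r, s k * w ∈ N q := by
    refine ⟨_, isReflection_inv_conj hr (s k), fun w hw ↦ ?_⟩
    have h := (mem_negSide_iff_inv_mul_mem hr hkr).mp hw
    rwa [cs.inv_simple] at h ⊢
  have hpair := Set.pair_comm i j
  by_cases hqij : ∃ v ∈ parabolic cs {i, j}, v ∈ N q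
  · obtain ⟨v, hv, hvq⟩ := hqij
    have hqij := mem_parabolic_of_mem_negSide hq hv hvq
    have hqi := isShortFrom_of_mem_parabolic hM hij hik hjk hq hqij hwi (hrk hw) (hrq w hw)
    have hqj := isShortFrom_of_mem_parabolic hM hij.symm hjk hik hq (hpair ▸ hqij) huj (hrk hu)
      (hrq u hu)
    exact hM₃ (hqi.eq_three_of_swap hM hij hqj)
  push Not at hqij
  obtain ⟨c, hc, rfl⟩ := ih q hq hrq hqij
    ⟨⟨_, hrq w hw, simple_mul_mem_negSide hik.symm (hrk hw) hwi⟩,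
      ⟨_, hrq u hu, simple_mul_notMem_negSide hM hjk.symm hik.symm hij.symm (hrk hu) huj⟩⟩
    ⟨⟨_, hrq u hu, simple_mul_mem_negSide hjk.symm (hrk hu) huj⟩,
      ⟨_, hrq w hw, simple_mul_notMem_negSide hM hik.symm hjk.symm hij (hrk hw) hwi⟩⟩
  have hci := isShortFrom_of_conj hM hij hik hjk hc (hqij c hc) hwi (hrk hw) (hrq w hw)
  have hcj := isShortFrom_of_conj hM hij.symm hjk hik (hpair ▸ hc) (hqij c hc) huj (hrk hu)
    (hrq u hu)
  exact hM₃ (hci.eq_three_of_swap hM hij hcj)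

theorem eq_conj_simple_of_crosses [Fintype B] (hcard : Fintype.card B = 3)
    (hM : ∀ i j, M i j ≠ 2) {i j k : B} (hij : i ≠ j) (hik : i ≠ k) (hjk : j ≠ k)
    (hM₃ : ¬(M i j = 3 ∧ M k i = 3 ∧ M k j = 3)) {r r₁ r₂ : W} (hr : cs.IsReflection r)
    (hr₁ : cs.IsReflection r₁) (hr₂ : cs.IsReflection r₂) (hm₁ : r₁ ∈ parabolic cs {i, j})
    (hm₂ : r₂ ∈ parabolic cs {i, j}) (hne : r₁ ≠ r₂) (h₁ : Crosses cs r r₁)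
    (h₂ : Crosses cs r r₂) (hout : ∀ v ∈ parabolic cs {i, j}, v ∉ N r) :
    ∃ c ∈ parabolic cs {i, j}, r = c * s k * c⁻¹ := by
  obtain ⟨v, hv, w, hw⟩ : ∃ v ∈ parabolic cs {i, j}, (N r).Nonempty :=
    ⟨1, one_mem _, h₁.1.mono Set.inter_subset_left⟩
  induction hn : ℓ (v * w) using Nat.strong_induction_on generalizing r r₁ r₂ v w with
  | _ n ih =>
  subst hn
  obtain ⟨c, hc, ⟨w₀, hw₀, hred⟩, ⟨w₁, hw₁, hi⟩, ⟨w₂, hw₂, hj⟩⟩ :=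
    exists_inner_of_crosses hr hr₁ hr₂ hm₁ hm₂ hne h₁ h₂
  have hconj (u : W) : u ∈ N r ↔ c⁻¹ * u ∈ N (c⁻¹ * r * c) :=
    mem_negSide_iff_inv_mul_mem hr (hout c hc)
  have hrc := isReflection_inv_conj hr c
  have hsub : N (c⁻¹ * r * c) ⊆ N (s k) := by
    obtain h | h | h := separatedFrom_of_isLeftReduced hcard hM hij hik hjk hred hrc
      ((hconj w₀).mp hw₀)
    · exact h
    · exact absurd hi (Set.disjoint_left.mp h ((hconj w₁).mp hw₁))
    · exact absurd hj (Set.disjoint_left.mp h ((hconj w₂).mp hw₂))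
  have hck : c⁻¹ * r * c = s k := by
    refine eq_simple_of_negSide_subset hM hij hik hjk hM₃ hrc hsub ⟨_, (hconj w₁).mp hw₁, hi⟩
      ⟨_, (hconj w₂).mp hw₂, hj⟩ fun q hq hrq hqout hqi hqj ↦ ?_
    have hwc := (hconj w).mp hw
    obtain ⟨u, hu, hlt⟩ := exists_length_mul_lt hM hij hik hjk (mul_mem hv hc) (hsub hwc)
    rw [mul_assoc v, mul_inv_cancel_left] at hlt
    exact ih _ hlt hq (cs.isReflection_simple i) (cs.isReflection_simple j)
      (simple_mem_parabolic (by simp)) (simple_mem_parabolic (by simp)) (simple_ne_simple hij)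
      hqi hqj hqout u hu _ (hrq _ hwc) rfl
  exact ⟨c, hc, by rw [← hck]; group⟩

/-! ### Reflections whose product has finite order -/

theorem pow_mul_mem_of_forall_mul_mem {G : Type*} [Monoid G] {g : G} {A : Set G}
    (hA : ∀ x ∈ A, g * x ∈ A) {x : G} (hx : x ∈ A) (n : ℕ) : g ^ n * x ∈ A := by
  simpa only [mul_left_iterate] using Set.MapsTo.iterate hA n hx

theorem inv_mul_mem_of_isOfFinOrder {G : Type*} [Group G] {g : G} (hg : IsOfFinOrder g)
    {A : Set G} (hA : ∀ x ∈ A, g * x ∈ A) {x : G} (hx : x ∈ A) : g⁻¹ * x ∈ A := by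
  obtain ⟨n, hn⟩ := hg.mem_powers_iff_mem_zpowers.mpr (inv_mem (Subgroup.mem_zpowers g))
  exact hn ▸ pow_mul_mem_of_forall_mul_mem hA hx n

theorem isOfFinOrder_of_forall_mul_mem {G : Type*} [Group G] {g : G} {A : Set G} (hfin : A.Finite)
    (hne : A.Nonempty) (hA : ∀ x ∈ A, g * x ∈ A) : IsOfFinOrder g := by
  obtain ⟨x, hx⟩ := hne
  by_contra h
  exact Set.infinite_of_injective_forall_mem
    ((mul_left_injective x).comp (injective_pow_iff_not_isOfFinOrder.mpr h))
    (pow_mul_mem_of_forall_mul_mem hA hx) hfin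

theorem eq_of_negSide_eq {r q : W} (hr : cs.IsReflection r) (hq : cs.IsReflection q)
    (h : N r = N q) : r = q := by
  obtain ⟨z, i, hrz, hz⟩ := exists_eq_conj_of_isReflection hr
  have hzi : z * s i ∈ N r := by
    rwa [show z * s i = r * z by rw [hrz]; group, self_mul_mem_negSide_iff hr]
  exact hrz.trans (eq_conj_of_mem_negSide_mul_simple hq (h ▸ hz) (h ▸ hzi)).symm

theorem negSide_inter_nonempty {r q : W} (hr : cs.IsReflection r) (hq : cs.IsReflection q)
    (hrq : IsOfFinOrder (r * q)) : (N r ∩ N q).Nonempty := by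
  rw [← Set.not_disjoint_iff_nonempty_inter, Set.disjoint_left]
  intro hdisj
  have hstable : ∀ w ∈ N r, r * q * w ∈ N r := fun w hw ↦ by
    rw [mul_assoc, self_mul_mem_negSide_iff hr]
    exact fun h ↦ hdisj h ((self_mul_mem_negSide_iff hq).mpr (hdisj hw))
  have hqr := inv_mul_mem_of_isOfFinOrder hrq hstable (self_mem_negSide hr)
  rw [mul_inv_rev, inv_mul_cancel_right, hq.inv] at hqr
  exact hdisj hqr (self_mem_negSide hq)

theorem negSide_diff_nonempty {r q : W} (hr : cs.IsReflection r) (hq : cs.IsReflection q)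
    (hne : r ≠ q) (hrq : IsOfFinOrder (r * q)) : (N r \ N q).Nonempty := by
  rw [Set.sdiff_nonempty]
  intro hsub
  have hstable : ∀ w ∈ N r, r * q * w ∈ N r := fun w hw ↦ by
    rw [mul_assoc, self_mul_mem_negSide_iff hr]
    exact fun h ↦ (self_mul_mem_negSide_iff hq).mp (hsub h) (hsub hw)
  refine hne (eq_of_negSide_eq hr hq (hsub.antisymm fun w hwq ↦ by_contra fun hwr ↦ ?_))
  have hqw := inv_mul_mem_of_isOfFinOrder hrq hstable ((self_mul_mem_negSide_iff hr).mpr hwr)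
  rw [mul_inv_rev, ← mul_assoc, inv_mul_cancel_right, hq.inv] at hqw
  exact (self_mul_mem_negSide_iff hq).mp (hsub hqw) hwq

theorem crosses_of_isOfFinOrder {r q : W} (hr : cs.IsReflection r) (hq : cs.IsReflection q)
    (hne : r ≠ q) (hrq : IsOfFinOrder (r * q)) : Crosses cs r q :=
  ⟨negSide_inter_nonempty hr hq hrq, negSide_diff_nonempty hr hq hne hrq⟩

theorem isOfFinOrder_conj_mul_conj {G : Type*} [Group G] {a b : G} (h : IsOfFinOrder (a * b))
    (c : G) : IsOfFinOrder (c⁻¹ * a * c * (c⁻¹ * b * c)) := by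
  simpa [mul_assoc] using (MulAut.conj c⁻¹).toMonoidHom.isOfFinOrder h

/-! ### Roots and the residues stabilized by their reflections -/

theorem mem_simpleRoot_iff {i : B} {w : W} : w ∈ simpleRoot cs i ↔ w ∉ N (s i) := by
  have h := cs.length_simple_mul w i
  rw [mem_negSide_iff, simpleRoot, Set.mem_ofPred_eq]
  omega

namespace IsRootPair

variable {α : Set W} {r : W}

theorem isReflection (hα : IsRootPair cs α r) : cs.IsReflection r := by
  obtain ⟨v, i, -, rfl⟩ := hα
  exact (cs.isReflection_simple i).conj v

theorem mul_mem_iff (hα : IsRootPair cs α r) (c w : W) :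
    c * w ∈ α ↔ (c ∈ α ↔ w ∉ N (c⁻¹ * r * c)) := by
  obtain ⟨v, i, rfl, rfl⟩ := hα
  have hmem (x : W) : x ∈ (v * ·) '' simpleRoot cs i ↔ v⁻¹ * x ∉ N (s i) := by
    rw [Set.image_mul_left, Set.mem_preimage, mem_simpleRoot_iff]
  rw [hmem, hmem, ← mul_assoc, _root_.mul_mem_negSide_iff (cs.isReflection_simple i),
    show (v⁻¹ * c)⁻¹ * s i * (v⁻¹ * c) = c⁻¹ * (v * s i * v⁻¹) * c by group]
  tauto

theorem self_mul_mem_iff (hα : IsRootPair cs α r) {x : W} : r * x ∈ α ↔ x ∉ α := by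
  have hr := isReflection_inv_conj hα.isReflection x
  have h := hα.mul_mem_iff x (x⁻¹ * r * x)
  rw [show x * (x⁻¹ * r * x) = r * x by group] at h
  simpa [self_mem_negSide hr] using h

theorem notMem_negSide_of_mem (hα : IsRootPair cs α r) {c w : W} (hc : c ∈ α) (hw : c * w ∈ α) :
    w ∉ N (c⁻¹ * r * c) :=
  ((hα.mul_mem_iff c w).mp hw).mp hc

end IsRootPair

theorem mul_mem_of_mem_res2 {r : W} {σ : Set W} (hσ : σ ∈ res2 cs r) {x : W} (hx : x ∈ σ) :
    r * x ∈ σ :=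
  hσ.2.subset ⟨x, hx, rfl⟩

theorem IsSphRank2Residue.finite {σ : Set W} (hσ : IsSphRank2Residue cs σ) : σ.Finite := by
  obtain ⟨c, i, j, -, hfin, rfl⟩ := hσ
  exact hfin.image _

theorem IsSphRank2Residue.exists_mem_iff {σ : Set W} (hσ : IsSphRank2Residue cs σ) :
    ∃ d i j, i ≠ j ∧ ∀ x, x ∈ σ ↔ d⁻¹ * x ∈ parabolic cs {i, j} := by
  obtain ⟨d, i, j, hij, -, rfl⟩ := hσ
  refine ⟨d, i, j, hij, fun x ↦ ?_⟩
  rw [Set.image_mul_left, parabolic, Set.image_pair]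
  rfl

theorem IsSphRank2Residue.nonempty {σ : Set W} (hσ : IsSphRank2Residue cs σ) : σ.Nonempty := by
  obtain ⟨d, i, j, -, hmem⟩ := hσ.exists_mem_iff
  exact ⟨d, (hmem d).mpr (by simp)⟩

theorem isOfFinOrder_mul_of_mem_res2 {r q : W} {σ : Set W} (hr : σ ∈ res2 cs r)
    (hq : σ ∈ res2 cs q) : IsOfFinOrder (r * q) :=
  isOfFinOrder_of_forall_mul_mem hr.1.finite hr.1.nonempty fun x hx ↦ by
    rw [mul_assoc]
    exact mul_mem_of_mem_res2 hr (mul_mem_of_mem_res2 hq hx)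

theorem ne_of_res2_subset {α : Set W} {r q : W} (hα : IsRootPair cs α r) {σ : Set W}
    (hσ : σ ∈ res2 cs q) (hsub : σ ⊆ α) : r ≠ q := by
  rintro rfl
  obtain ⟨x, hx⟩ := hσ.1.nonempty
  exact hα.self_mul_mem_iff.mp (hsub (mul_mem_of_mem_res2 hσ hx)) (hsub hx)

theorem exists_conj_mem_parabolic_of_mem_res2 {α : Set W} {r r₁ r₂ : W} (hα : IsRootPair cs α r)
    {σ : Set W} (h₁ : σ ∈ res2 cs r₁) (h₂ : σ ∈ res2 cs r₂) (hsub : σ ⊆ α) :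
    ∃ d i j, i ≠ j ∧ d⁻¹ * r₁ * d ∈ parabolic cs {i, j} ∧ d⁻¹ * r₂ * d ∈ parabolic cs {i, j} ∧
      ∀ v ∈ parabolic cs {i, j}, v ∉ N (d⁻¹ * r * d) := by
  obtain ⟨d, i, j, hij, hmem⟩ := h₁.1.exists_mem_iff
  have hd : d ∈ σ := (hmem d).mpr (by simp)
  have hconj {q : W} (hq : σ ∈ res2 cs q) : d⁻¹ * q * d ∈ parabolic cs {i, j} := by
    rw [mul_assoc]
    exact (hmem _).mp (mul_mem_of_mem_res2 hq hd)
  refine ⟨d, i, j, hij, hconj h₁, hconj h₂, fun v hv ↦ ?_⟩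
  exact hα.notMem_negSide_of_mem (hsub hd) (hsub ((hmem _).mpr (by simpa using hv)))

theorem mul_mul_mem_of_mem_res2 {c r q : W} {i j : B} (hr : c⁻¹ * r * c = s i)
    (hq : c⁻¹ * q * c = s j) {σ : Set W} (hσr : σ ∈ res2 cs r) (hσq : σ ∈ res2 cs q) {v x : W}
    (hv : v ∈ parabolic cs {i, j}) (hx : c * x ∈ σ) : c * (v * x) ∈ σ := by
  have hstep {p : W} {l : B} (hp : c⁻¹ * p * c = s l) (hσp : σ ∈ res2 cs p) {y : W}
      (hy : c * y ∈ σ) : c * (s l * y) ∈ σ := by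
    rw [← hp, show c * (c⁻¹ * p * c * y) = p * (c * y) by group]
    exact mul_mem_of_mem_res2 hσp hy
  induction hv using parabolic_induction with
  | one => rwa [one_mul]
  | mul_simple_left v _ l hl ih =>
    rw [mul_assoc]
    obtain rfl | rfl := hl
    · exact hstep hr hσr ih
    · exact hstep hq hσq ih

/-! ### Combinatorial triangles -/

theorem exists_mul_notMem_negSide_simple (hM : ∀ i j, M i j ≠ 2) {i j k : B} (hij : i ≠ j)
    (hik : i ≠ k) (hjk : j ≠ k) (w : W) : ∃ v ∈ parabolic cs {i, j}, v * w ∉ N (s k) := by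
  have hi : s i ∈ parabolic cs {i, j} := simple_mem_parabolic (by simp)
  have hj : s j ∈ parabolic cs {i, j} := simple_mem_parabolic (by simp)
  obtain ⟨p, hp, d, hd, rfl⟩ := exists_eq_mul_isLeftReduced (cs := cs) {i, j} w
  refine ⟨s i * s j * p⁻¹, mul_mem (mul_mem hi hj) (inv_mem hp), fun hk ↦ ?_⟩
  rw [mul_assoc, inv_mul_cancel_left] at hk
  have hne := simple_ne_simple (cs := cs) hij
  have hne_one (l : B) : s l ≠ 1 := fun h ↦ by simpa [h] using cs.length_simple l
  obtain h | h | h := eq_one_or_simple_of_mul_mem_negSide hM hij hik hjk (mul_mem hi hj) hd hk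
  · exact hne (by simpa using eq_inv_of_mul_eq_one_left h)
  · exact hne_one j (mul_eq_left.mp h)
  · exact hne_one i (mul_eq_right.mp h)

theorem mem_of_conj_eq_simple (hM : ∀ i j, M i j ≠ 2) {i j k : B} (hij : i ≠ j) (hik : i ≠ k)
    (hjk : j ≠ k) {α : Set W} {r r₁ r₂ c : W} (hα : IsRootPair cs α r)
    (h₁ : c⁻¹ * r₁ * c = s i) (h₂ : c⁻¹ * r₂ * c = s j) (h : c⁻¹ * r * c = s k)
    (hσ : ∃ σ, σ ∈ res2 cs r₁ ∧ σ ∈ res2 cs r₂ ∧ σ ⊆ α) : c ∈ α := by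
  obtain ⟨σ, hσ₁, hσ₂, hsub⟩ := hσ
  obtain ⟨x, hx⟩ := hσ₁.1.nonempty
  obtain ⟨v, hv, hvk⟩ := exists_mul_notMem_negSide_simple hM hij hik hjk (c⁻¹ * x)
  have hmem : c * (v * (c⁻¹ * x)) ∈ α :=
    hsub (mul_mul_mem_of_mem_res2 h₁ h₂ hσ₁ hσ₂ hv (by rwa [mul_inv_cancel_left]))
  rw [hα.mul_mem_iff, h] at hmem
  exact hmem.mpr hvk

theorem not_all_eq_three [Fintype B] (hcard : Fintype.card B = 3)
    (hhyp : ∃ i j, i ≠ j ∧ M i j ≠ 3) {i j k : B} (hij : i ≠ j) (hik : i ≠ k) (hjk : j ≠ k) :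
    ¬(M i j = 3 ∧ M k i = 3 ∧ M k j = 3) := by
  rintro ⟨h₁, h₂, h₃⟩
  obtain ⟨a, b, hab, hM₃⟩ := hhyp
  have hsymm := M.symmetric
  obtain rfl | rfl | rfl := eq_or_eq_or_eq_of_card_eq_three hcard hij hik hjk a <;>
    obtain rfl | rfl | rfl := eq_or_eq_or_eq_of_card_eq_three hcard hij hik hjk b <;>
    first
    | exact hab rfl
    | exact hM₃ (by assumption)
    | exact hM₃ ((hsymm _ _).trans (by assumption))

theorem exists_conj_eq_simple_of_mem_parabolic [Fintype B] (hcard : Fintype.card B = 3)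
    (hM : ∀ i j, M i j ≠ 2) (hhyp : ∃ i j, i ≠ j ∧ M i j ≠ 3) {i j : B} (hij : i ≠ j)
    {r₁ r₂ r₃ : W} (hr₁ : cs.IsReflection r₁) (hr₂ : cs.IsReflection r₂)
    (hr₃ : cs.IsReflection r₃) (hm₁ : r₁ ∈ parabolic cs {i, j}) (hm₂ : r₂ ∈ parabolic cs {i, j})
    (hne : r₁ ≠ r₂) (hfin₁ : IsOfFinOrder (r₃ * r₁)) (hfin₂ : IsOfFinOrder (r₃ * r₂))
    (hout : ∀ v ∈ parabolic cs {i, j}, v ∉ N r₃) :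
    ∃ c i₁ i₂ i₃, i₁ ≠ i₂ ∧ i₁ ≠ i₃ ∧ i₂ ≠ i₃ ∧
      c⁻¹ * r₁ * c = s i₁ ∧ c⁻¹ * r₂ * c = s i₂ ∧ c⁻¹ * r₃ * c = s i₃ := by
  obtain ⟨k, hik, hjk⟩ := exists_third_of_card_eq_three hcard i j
  have hcross {r : W} (hr : cs.IsReflection r) (hm : r ∈ parabolic cs {i, j})
      (hfin : IsOfFinOrder (r₃ * r)) : Crosses cs r₃ r :=
    crosses_of_isOfFinOrder hr₃ hr (fun h ↦ hout r hm (h ▸ self_mem_negSide hr₃)) hfin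
  obtain ⟨c, hc, hc₃⟩ := eq_conj_simple_of_crosses hcard hM hij hik hjk
    (not_all_eq_three hcard hhyp hij hik hjk) hr₃ hr₁ hr₂ hm₁ hm₂ hne (hcross hr₁ hm₁ hfin₁)
    (hcross hr₂ hm₂ hfin₂) hout
  have h₃ : c⁻¹ * r₃ * c = s k := by rw [hc₃]; group
  have hsimple {r : W} (hr : cs.IsReflection r) (hm : r ∈ parabolic cs {i, j})
      (hfin : IsOfFinOrder (r₃ * r)) : c⁻¹ * r * c = s i ∨ c⁻¹ * r * c = s j := by
    by_contra! hno
    have hrc := isReflection_inv_conj hr c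
    have hfin' := isOfFinOrder_conj_mul_conj hfin c
    rw [h₃] at hfin'
    obtain ⟨w, hwk, hwr⟩ := negSide_inter_nonempty (cs.isReflection_simple k) hrc hfin'
    exact Set.disjoint_left.mp (disjoint_negSide_simple hM hij hik hjk hrc
      (mul_mem (mul_mem (inv_mem hc) hm) hc) hno.1 hno.2) hwr hwk
  have hne' : c⁻¹ * r₁ * c ≠ c⁻¹ * r₂ * c := by simpa using hne
  obtain h₁ | h₁ := hsimple hr₁ hm₁ hfin₁ <;> obtain h₂ | h₂ := hsimple hr₂ hm₂ hfin₂
  · exact absurd (h₁.trans h₂.symm) hne'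
  · exact ⟨c, i, j, k, hij, hik, hjk, h₁, h₂, h₃⟩
  · exact ⟨c, j, i, k, hij.symm, hjk, hik, h₁, h₂, h₃⟩
  · exact absurd (h₁.trans h₂.symm) hne'

theorem exists_conj_eq_simple [Fintype B] (hcard : Fintype.card B = 3) (hM : ∀ i j, M i j ≠ 2)
    (hhyp : ∃ i j, i ≠ j ∧ M i j ≠ 3) {α₁ α₂ α₃ : Set W} {r₁ r₂ r₃ : W}
    (hα₁ : IsRootPair cs α₁ r₁) (hα₂ : IsRootPair cs α₂ r₂) (hα₃ : IsRootPair cs α₃ r₃)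
    (hσ₁ : ∃ σ, σ ∈ res2 cs r₂ ∧ σ ∈ res2 cs r₃ ∧ σ ⊆ α₁)
    (hσ₂ : ∃ σ, σ ∈ res2 cs r₁ ∧ σ ∈ res2 cs r₃ ∧ σ ⊆ α₂)
    (hσ₃ : ∃ σ, σ ∈ res2 cs r₁ ∧ σ ∈ res2 cs r₂ ∧ σ ⊆ α₃) :
    ∃ c i₁ i₂ i₃, i₁ ≠ i₂ ∧ i₁ ≠ i₃ ∧ i₂ ≠ i₃ ∧
      c⁻¹ * r₁ * c = s i₁ ∧ c⁻¹ * r₂ * c = s i₂ ∧ c⁻¹ * r₃ * c = s i₃ := by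
  obtain ⟨σ₁, hσ₁₂, hσ₁₃, hsub₁⟩ := hσ₁
  obtain ⟨σ₂, hσ₂₁, hσ₂₃, -⟩ := hσ₂
  obtain ⟨σ₃, hσ₃₁, hσ₃₂, hsub₃⟩ := hσ₃
  obtain ⟨d, i, j, hij, hm₁, hm₂, hout⟩ :=
    exists_conj_mem_parabolic_of_mem_res2 hα₃ hσ₃₁ hσ₃₂ hsub₃
  have hne : d⁻¹ * r₁ * d ≠ d⁻¹ * r₂ * d := by
    simpa using ne_of_res2_subset hα₁ hσ₁₂ hsub₁
  obtain ⟨c, i₁, i₂, i₃, h₁₂, h₁₃, h₂₃, h₁, h₂, h₃⟩ :=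
    exists_conj_eq_simple_of_mem_parabolic hcard hM hhyp hij
      (isReflection_inv_conj hα₁.isReflection d) (isReflection_inv_conj hα₂.isReflection d)
      (isReflection_inv_conj hα₃.isReflection d) hm₁ hm₂ hne
      (isOfFinOrder_conj_mul_conj (isOfFinOrder_mul_of_mem_res2 hσ₂₃ hσ₂₁) d)
      (isOfFinOrder_conj_mul_conj (isOfFinOrder_mul_of_mem_res2 hσ₁₃ hσ₁₂) d) hout
  have hconj (r : W) : (d * c)⁻¹ * r * (d * c) = c⁻¹ * (d⁻¹ * r * d) * c := by group
  exact ⟨d * c, i₁, i₂, i₃, h₁₂, h₁₃, h₂₃, (hconj r₁).trans h₁, (hconj r₂).trans h₂,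
    (hconj r₃).trans h₃⟩

end CoxeterComplex

theorem stmt18_general [Fintype B] (hcard : Fintype.card B = 3) (cs : CoxeterSystem M W)
    (hM : ∀ s t : B, M.M s t ≠ 2) (hhyp : ∃ s t : B, s ≠ t ∧ M.M s t ≠ 3)
    (α₁ α₂ α₃ : Set W) (r₁ r₂ r₃ : W)
    (hα₁ : IsRootPair cs α₁ r₁) (hα₂ : IsRootPair cs α₂ r₂) (hα₃ : IsRootPair cs α₃ r₃)
    (hσ₁ : ∃ σ : Set W, σ ∈ res2 cs r₂ ∧ σ ∈ res2 cs r₃ ∧ σ ⊆ α₁)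
    (hσ₂ : ∃ σ : Set W, σ ∈ res2 cs r₁ ∧ σ ∈ res2 cs r₃ ∧ σ ⊆ α₂)
    (hσ₃ : ∃ σ : Set W, σ ∈ res2 cs r₁ ∧ σ ∈ res2 cs r₂ ∧ σ ⊆ α₃) :
    ∃! c : W, c ∈ α₁ ∩ α₂ ∩ α₃ := by
  obtain ⟨c, i₁, i₂, i₃, h₁₂, h₁₃, h₂₃, h₁, h₂, h₃⟩ :=
    exists_conj_eq_simple hcard hM hhyp hα₁ hα₂ hα₃ hσ₁ hσ₂ hσ₃
  have hc₁ : c ∈ α₁ := mem_of_conj_eq_simple hM h₂₃ h₁₂.symm h₁₃.symm hα₁ h₂ h₃ h₁ hσ₁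
  have hc₂ : c ∈ α₂ := mem_of_conj_eq_simple hM h₁₃ h₁₂ h₂₃.symm hα₂ h₁ h₃ h₂ hσ₂
  have hc₃ : c ∈ α₃ := mem_of_conj_eq_simple hM h₁₂ h₁₃ h₂₃ hα₃ h₁ h₂ h₃ hσ₃
  refine ⟨c, ⟨⟨hc₁, hc₂⟩, hc₃⟩, fun y ⟨⟨hy₁, hy₂⟩, hy₃⟩ ↦ ?_⟩
  have hside {α : Set W} {r : W} {i : B} (hα : IsRootPair cs α r) (hc : c ∈ α)
      (hr : c⁻¹ * r * c = cs.simple i) (hy : y ∈ α) : c⁻¹ * y ∉ negSide cs (cs.simple i) :=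
    hr ▸ hα.notMem_negSide_of_mem hc (by rwa [mul_inv_cancel_left])
  by_contra hne
  obtain ⟨i, hi⟩ := exists_mem_negSide_simple_of_ne_one (cs := cs) (w := c⁻¹ * y)
    fun h ↦ hne (inv_mul_eq_one.mp h).symm
  obtain rfl | rfl | rfl := eq_or_eq_or_eq_of_card_eq_three hcard h₁₂ h₁₃ h₂₃ i
  · exact hside hα₁ hc₁ h₁ hy₁ hi
  · exact hside hα₂ hc₂ h₂ hy₂ hi
  · exact hside hα₃ hc₃ h₃ hy₃ hi

/-- Let `(W,S)` be a 2-spherical cyclic hyperbolic Coxeter system of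
rank 3 (`3 ≤ m_{st} < ∞` for all `s ≠ t`, not all equal to `3`).  Then every
combinatorial triangle `{α₁, α₂, α₃}` of roots contains a unique chamber. -/
theorem stmt18 [Fintype B] (hcard : Fintype.card B = 3)
    (cs : CoxeterSystem M W)
    (h2sph : ∀ s t : B, s ≠ t → 3 ≤ M.M s t ∧ M.M s t ≠ 0)
    (hhyp : ∃ s t : B, s ≠ t ∧ M.M s t ≠ 3)
    (α₁ α₂ α₃ : Set W) (r₁ r₂ r₃ : W)
    (hα₁ : IsRootPair cs α₁ r₁) (hα₂ : IsRootPair cs α₂ r₂) (hα₃ : IsRootPair cs α₃ r₃)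
    (hne12 : α₁ ≠ α₂) (hne13 : α₁ ≠ α₃) (hne23 : α₂ ≠ α₃)
    -- (CT1): `{r₁, r₂, r₃}` is a reflection triangle:
    (hfin12 : IsOfFinOrder (r₁ * r₂)) (hfin13 : IsOfFinOrder (r₁ * r₃))
    (hfin23 : IsOfFinOrder (r₂ * r₃))
    (hempty : ¬ ∃ R : Set W, R ∈ res2 cs r₁ ∧ R ∈ res2 cs r₂ ∧ R ∈ res2 cs r₃)
    -- (CT2):
    (hσ₁ : ∃ σ : Set W, σ ∈ res2 cs r₂ ∧ σ ∈ res2 cs r₃ ∧ σ ⊆ α₁)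
    (hσ₂ : ∃ σ : Set W, σ ∈ res2 cs r₁ ∧ σ ∈ res2 cs r₃ ∧ σ ⊆ α₂)
    (hσ₃ : ∃ σ : Set W, σ ∈ res2 cs r₁ ∧ σ ∈ res2 cs r₂ ∧ σ ⊆ α₃) :
    ∃! c : W, c ∈ α₁ ∩ α₂ ∩ α₃ := by
  have hM (s t : B) : M.M s t ≠ 2 := by grind [M.diagonal]
  exact stmt18_general hcard cs hM hhyp α₁ α₂ α₃ r₁ r₂ r₃ hα₁ hα₂ hα₃ hσ₁ hσ₂ hσ₃
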